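/- arXiv:1108.1247 — 3 statements merged into one kernel-verified Lean document; each statement's English description precedes it below -/
import Mathlib

section
/- Let k and t be positive integers with k ≥ 3. There exists n₀ = n₀(k,t) such that for all integers n ≥ n₀, the maximum number of edges in a k-uniform hypergraph on n vertices containing no k-uniform loose path of length 2t+2 equals C(n−1,k−1) + C(n−2,k−1) + … + C(n−t,k−1) + 1; moreover, a family F ⊆ binom([n],k) with no loose path of length 2t+2 attains this maximum size if and only if there exists a set S ⊆ [n] with |S| = t such that F consists of exactly all k-subsets of [n] that intersect S together with one additional k-set disjoint from S. -/
open Finset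

/-- The family `F` of k-sets contains a k-uniform loose path of length ℓ. -/
def ContainsLoosePath (k ℓ : ℕ) {n : ℕ} (F : Finset (Finset (Fin n))) : Prop :=
  ∃ P : Fin ℓ → Finset (Fin n), Function.Injective P ∧
    (∀ i, P i ∈ F) ∧ (∀ i, (P i).card = k) ∧
    (∀ i j : Fin ℓ, i < j → ((P i ∩ P j).Nonempty ↔ (i : ℕ) + 1 = (j : ℕ)))

/-!
A loose path meets each vertex in at most two of its edges, so `2 * t + 2` edges cannot be covered
by `t` vertices and one extra edge; this gives the lower bound.

For the upper bound, Füredi's delta-system method extracts from a large family without the loose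
path a homogeneous subfamily of positive proportion, which must be a vertex-disjoint union of
stars, as a homogeneous family of any other type contains arbitrarily long loose paths. So every
dense subfamily has a vertex of large degree, and a bounded set of heavy vertices meets all but a
lower-order number of the edges.

Let `B` be this set, and call a vertex of `B` an extender of a `(k - 1)`-set outside `B` if
together they form an edge. By counting, almost every `(k - 1)`-set has exactly `t` extenders, and
if two typical ones that intersect had different extenders, they could be completed to a loose
path of length `2 * t + 2`. Hence almost all have the same set `S` of `t` extenders.

Finally, two edges disjoint from `S` agree outside the few weak vertices, those lying in many
`(k - 1)`-sets that `S` does not fully extend. Each weak vertex costs more edges through `S` than it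
allows edges disjoint from `S`, so in an extremal family there are none, and a single edge is
disjoint from `S`.
-/

section LoosePath

variable {α : Type*} [DecidableEq α] {F F' : Finset (Finset α)} {e f p U T : Finset α}
  {k m : ℕ} {u v : α}

/-- `LoosePath F m p U` says that `F` contains a loose path with `m` edges and vertex set `U` whose
last edge has `p` as its set of private vertices, i.e. those in no earlier edge. -/
inductive LoosePath (F : Finset (Finset α)) : ℕ → Finset α → Finset α → Prop
  | single {e : Finset α} (he : e ∈ F) : LoosePath F 1 e e
  | cons {m : ℕ} {p U e : Finset α} (h : LoosePath F m p U) (he : e ∈ F)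
      (hmeet : (e ∩ U).Nonempty) (hsub : e ∩ U ⊆ p) (hnew : ¬ e ⊆ U) :
      LoosePath F (m + 1) (e \ U) (e ∪ U)

/-- No loose path with `ℓ` edges lies in the family `F`. -/
def LoosePathFree (ℓ : ℕ) (F : Finset (Finset α)) : Prop :=
  ∀ p U, ¬ LoosePath F ℓ p U

lemma LoosePath.subset (h : LoosePath F m p U) : p ⊆ U := by
  cases h with
  | single => exact Subset.rfl
  | cons => exact sdiff_subset.trans subset_union_left

lemma LoosePath.card_le (h : LoosePath F m p U) (hF : (F : Set (Finset α)).Sized k) :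
    #U ≤ k * m := by
  induction h with
  | single he => rw [hF he, mul_one]
  | @cons m _ U e _ he _ _ _ ih =>
    calc #(e ∪ U) ≤ #e + #U := card_union_le e U
      _ ≤ k + k * m := Nat.add_le_add (hF he).le ih
      _ = k * (m + 1) := by ring

lemma LoosePath.mono (hFF' : F ⊆ F') (h : LoosePath F m p U) : LoosePath F' m p U := by
  induction h with
  | single he => exact .single (hFF' he)
  | cons _ he hmeet hsub hnew ih => exact .cons ih (hFF' he) hmeet hsub hnew

lemma LoosePathFree.subset (h : LoosePathFree m F') (hFF' : F ⊆ F') : LoosePathFree m F :=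
  fun p U hp => h p U (hp.mono hFF')

lemma LoosePath.insert_new (h : LoosePath F m p U) (hv : v ∈ p) (hT : T.Nonempty)
    (hTU : Disjoint T U) (hvT : insert v T ∈ F) : LoosePath F (m + 1) T (T ∪ U) := by
  have hvU : v ∈ U := h.subset hv
  have hinter : insert v T ∩ U = {v} := by
    rw [insert_inter_of_mem hvU, disjoint_iff_inter_eq_empty.1 hTU, insert_empty]
  have hnew : ¬ insert v T ⊆ U := fun hsub =>
    hT.ne_empty (hTU.eq_bot_of_le ((subset_insert v T).trans hsub))
  convert h.cons hvT (hinter ▸ singleton_nonempty v) (hinter ▸ singleton_subset_iff.2 hv) hnew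
    using 1
  · rw [insert_sdiff_of_mem _ hvU, sdiff_eq_self_of_disjoint hTU]
  · rw [insert_union, insert_eq_of_mem (mem_union_right T hvU)]

lemma LoosePath.insert_private (h : LoosePath F m p U) (hT : T.Nonempty) (hTp : T ⊆ p)
    (huU : u ∉ U) (huT : insert u T ∈ F) : LoosePath F (m + 1) {u} (insert u U) := by
  have hTU : T ⊆ U := hTp.trans h.subset
  have hinter : insert u T ∩ U = T := by
    rw [insert_inter_of_notMem huU, inter_eq_left.2 hTU]
  have hnew : ¬ insert u T ⊆ U := fun hsub => huU (hsub (mem_insert_self u T))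
  convert h.cons huT (by rwa [hinter]) (by rwa [hinter]) hnew using 1
  · rw [insert_sdiff_of_notMem _ huU, sdiff_eq_empty_iff_subset.2 hTU, insert_empty]
  · rw [insert_union, union_eq_right.2 hTU]

lemma LoosePath.exists_edges (h : LoosePath F m p U) : ∃ P : ℕ → Finset α,
    (∀ i < m, P i ∈ F ∧ P i ⊆ U) ∧
    (∀ i, i + 1 < m → Disjoint (P i) p) ∧ (∀ i, i + 1 = m → p ⊆ P i) ∧
    (∀ i j, i < j → j < m → P i ≠ P j ∧ ((P i ∩ P j).Nonempty ↔ i + 1 = j)) := by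
  induction h with
  | @single e he =>
    refine ⟨fun _ => e, fun _ _ => ⟨he, Subset.rfl⟩, fun i hi => by omega,
      fun _ _ => Subset.rfl, fun i j hij hj => by omega⟩
  | @cons m p U e h he hmeet hsub hnew ih =>
    obtain ⟨P, hmem, hdisj, hlast, hadj⟩ := ih
    have hP : ∀ i < m, Function.update P m e i = P i := fun i hi =>
      Function.update_of_ne hi.ne _ _
    have hPm : Function.update P m e m = e := Function.update_self ..
    have hmeet_iff : ∀ i < m, ((P i ∩ e).Nonempty ↔ i + 1 = m) := by
      intro i hi
      refine ⟨fun ⟨x, hx⟩ => ?_, fun hi' => ?_⟩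
      · by_contra hne
        rw [mem_inter] at hx
        exact disjoint_left.1 (hdisj i (by omega)) hx.1
          (hsub (mem_inter.2 ⟨hx.2, (hmem i hi).2 hx.1⟩))
      · obtain ⟨x, hx⟩ := hmeet
        exact ⟨x, mem_inter.2 ⟨hlast i hi' (hsub hx), (mem_inter.1 hx).1⟩⟩
    refine ⟨Function.update P m e, fun i hi => ?_, fun i hi => ?_, fun i hi => ?_,
      fun i j hij hj => ?_⟩
    · obtain hi | rfl := Nat.lt_succ_iff_lt_or_eq.1 hi
      · rw [hP i hi]
        exact ⟨(hmem i hi).1, (hmem i hi).2.trans subset_union_right⟩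
      · rw [hPm]
        exact ⟨he, subset_union_left⟩
    · rw [hP i (by omega)]
      exact disjoint_sdiff.mono_left (hmem i (by omega)).2
    · obtain rfl : i = m := by omega
      rw [hPm]
      exact sdiff_subset
    · rw [hP i (by omega)]
      obtain hj | rfl := Nat.lt_succ_iff_lt_or_eq.1 hj
      · rw [hP j hj]
        exact hadj i j hij hj
      · rw [hPm]
        exact ⟨fun heq => hnew (heq ▸ (hmem i hij).2), hmeet_iff i hij⟩

end LoosePath

lemma LoosePath.containsLoosePath {n k ℓ : ℕ} {F : Finset (Finset (Fin n))} {p U : Finset (Fin n)}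
    (h : LoosePath F ℓ p U) (hF : (F : Set (Finset (Fin n))).Sized k) :
    ContainsLoosePath k ℓ F := by
  obtain ⟨P, hmem, -, -, hadj⟩ := h.exists_edges
  refine ⟨fun i => P i, fun i j hij => ?_, fun i => (hmem i i.2).1, fun i => hF (hmem i i.2).1,
    fun i j hij => (hadj i j hij j.2).2⟩
  rcases lt_trichotomy i j with hlt | heq | hgt
  · exact absurd hij (hadj i j hlt j.2).1
  · exact heq
  · exact absurd hij.symm (hadj j i hgt i.2).1

lemma loosePathFree_of_not_containsLoosePath {n k ℓ : ℕ} {F : Finset (Finset (Fin n))}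
    (hF : (F : Set (Finset (Fin n))).Sized k) (h : ¬ ContainsLoosePath k ℓ F) :
    LoosePathFree ℓ F :=
  fun _ _ hp => h (hp.containsLoosePath hF)

section Robust

variable {α : Type*} [DecidableEq α]

/-- `p` is the kernel of many members of `F`: however `s` vertices are forbidden, some member of `F`
contains `p` and avoids the forbidden vertices outside `p`. This plays the role of a sunflower with
kernel `p` and more than `s` petals. -/
def IsRobustKernel (s : ℕ) (F : Finset (Finset α)) (p : Finset α) : Prop :=
  ∀ W : Finset α, #W ≤ s → ∃ f ∈ F, p ⊆ f ∧ Disjoint (f \ p) W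

lemma exists_card_le_mul_card_filter_mem {ι : Type*} [Nonempty α] {I : Finset ι} {g : ι → Finset α}
    {W : Finset α} {s : ℕ} (hW : #W ≤ s) (h : ∀ i ∈ I, ¬ Disjoint (g i) W) :
    ∃ w, #I ≤ s * #{i ∈ I | w ∈ g i} := by
  classical
  have hcover : I ⊆ W.biUnion fun w => {i ∈ I | w ∈ g i} := fun i hi => by
    obtain ⟨w, hwi, hwW⟩ := not_disjoint_iff.1 (h i hi)
    exact mem_biUnion.2 ⟨w, hwW, mem_filter.2 ⟨hi, hwi⟩⟩
  obtain rfl | hne := W.eq_empty_or_nonempty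
  · rw [biUnion_empty, subset_empty] at hcover
    exact ⟨Classical.arbitrary α, by simp [hcover]⟩
  · obtain ⟨w, -, hmax⟩ := exists_max_image W (fun w => #{i ∈ I | w ∈ g i}) hne
    refine ⟨w, ?_⟩
    calc #I ≤ #(W.biUnion fun w => {i ∈ I | w ∈ g i}) := card_le_card hcover
      _ ≤ #W * #{i ∈ I | w ∈ g i} := card_biUnion_le_card_mul _ _ _ hmax
      _ ≤ s * #{i ∈ I | w ∈ g i} := Nat.mul_le_mul_right _ hW

lemma exists_card_le_mul_card_of_subset_union_biUnion {ι : Type*} {F R : Finset α} {J : Finset ι}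
    {B : ι → Finset α} (hcover : F ⊆ R ∪ J.biUnion B) (hR : 2 * #R < #F) :
    ∃ A ∈ J, #F ≤ 2 * #J * #(B A) := by
  have hsum : #F ≤ 2 * ∑ A ∈ J, #(B A) := by
    have hunion := (card_le_card hcover).trans (card_union_le _ _)
    have hbiUnion : #(J.biUnion B) ≤ ∑ A ∈ J, #(B A) := card_biUnion_le
    omega
  have hJ : J.Nonempty := by
    by_contra hJ
    rw [not_nonempty_iff_eq_empty.1 hJ, sum_empty] at hsum
    omega
  obtain ⟨A, hA, hmax⟩ := exists_max_image J (fun A => #(B A)) hJ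
  refine ⟨A, hA, hsum.trans ?_⟩
  rw [mul_assoc]
  exact Nat.mul_le_mul_left 2 (sum_le_card_nsmul _ _ _ hmax)

end Robust

section Homogeneous

variable {α κ : Type*} [DecidableEq κ] {s : ℕ} {col : α → κ}
  {F B : Finset (Finset α)} {e f : Finset α} {A A' : Finset κ} {J : Finset (Finset κ)}

/-- The vertices of `e` whose colour lies in `A`. -/
def colorPart (col : α → κ) (e : Finset α) (A : Finset κ) : Finset α :=
  {v ∈ e | col v ∈ A}

lemma mem_colorPart {v : α} : v ∈ colorPart col e A ↔ v ∈ e ∧ col v ∈ A :=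
  mem_filter

lemma colorPart_subset : colorPart col e A ⊆ e :=
  filter_subset _ _

lemma image_colorPart (he : Set.SurjOn col e Set.univ) : (colorPart col e A).image col = A := by
  ext a
  simp only [mem_image, mem_colorPart]
  constructor
  · rintro ⟨v, ⟨-, hv⟩, rfl⟩
    exact hv
  · intro ha
    obtain ⟨v, hv, rfl⟩ := he (Set.mem_univ a)
    exact ⟨v, ⟨hv, ha⟩, rfl⟩

variable [DecidableEq α]

/-- The opposite of robustness for the `A`-coloured parts of the members of `B`: all members with
the same `A`-part `p` are pierced outside `p` by `s` vertices. -/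
def IsThin (s : ℕ) (col : α → κ) (A : Finset κ) (B : Finset (Finset α)) : Prop :=
  ∀ p, ∃ W : Finset α, #W ≤ s ∧ ∀ e ∈ B, colorPart col e A = p → ¬ Disjoint (e \ p) W

/-- Füredi's homogeneity: any two members of `F` intersect in a set of colours belonging to `J`,
and for each colour set in `J` the corresponding part of each member of `F` is a robust kernel. -/
structure IsHomogeneous_s5 (s : ℕ) (col : α → κ) (J : Finset (Finset κ)) (F : Finset (Finset α)) :
    Prop where
  image_inter_mem : ∀ e ∈ F, ∀ f ∈ F, e ≠ f → (e ∩ f).image col ∈ J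
  isRobustKernel : ∀ A ∈ J, ∀ e ∈ F, IsRobustKernel s F (colorPart col e A)

lemma colorPart_image_inter (he : Set.InjOn col e) :
    colorPart col e ((e ∩ f).image col) = e ∩ f := by
  ext v
  simp only [mem_colorPart, mem_image, mem_inter]
  constructor
  · rintro ⟨hv, w, hw, hwv⟩
    obtain rfl := he hw.1 hv hwv
    exact hw
  · exact fun hv => ⟨hv.1, v, hv, rfl⟩

lemma isThin_empty : IsThin s col A ∅ :=
  fun _ => ⟨∅, by simp, by simp⟩

lemma IsThin.insert (hB : IsThin s col A B) (hBF : insert e B ⊆ F)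
    (he : ¬ IsRobustKernel s F (colorPart col e A)) : IsThin s col A (insert e B) := by
  intro p
  by_cases hp : colorPart col e A = p
  · subst hp
    simp only [IsRobustKernel, not_forall, not_exists, not_and] at he
    obtain ⟨W, hWs, hW⟩ := he
    exact ⟨W, hWs, fun f hf hfe => hW f (hBF hf) (hfe ▸ colorPart_subset)⟩
  · obtain ⟨W, hWs, hW⟩ := hB p
    refine ⟨W, hWs, fun f hf hfp => ?_⟩
    obtain rfl | hf := mem_insert.1 hf
    · exact absurd hfp hp
    · exact hW f hf hfp

lemma exists_robust_core (s : ℕ) (col : α → κ) (J : Finset (Finset κ)) (F : Finset (Finset α)) :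
    ∃ R ⊆ F, (∀ A ∈ J, ∀ e ∈ R, IsRobustKernel s R (colorPart col e A)) ∧
      ∃ B : Finset κ → Finset (Finset α), (∀ A, B A ⊆ F) ∧ (∀ A, IsThin s col A (B A)) ∧
        F ⊆ R ∪ J.biUnion B := by
  induction F using Finset.strongInduction with
  | H F ih =>
  by_cases hrobust : ∀ A ∈ J, ∀ e ∈ F, IsRobustKernel s F (colorPart col e A)
  · exact ⟨F, Subset.rfl, hrobust, fun _ => ∅, fun _ => empty_subset F, fun _ => isThin_empty,
      subset_union_left⟩
  push Not at hrobust
  obtain ⟨A₀, hA₀, e₀, he₀, hnot⟩ := hrobust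
  obtain ⟨R, hRF, hR, B, hBF, hthin, hcover⟩ := ih _ (erase_ssubset he₀)
  have hinsert : insert e₀ (B A₀) ⊆ F :=
    insert_subset he₀ ((hBF A₀).trans (erase_subset _ _))
  refine ⟨R, hRF.trans (erase_subset _ _), hR, Function.update B A₀ (insert e₀ (B A₀)),
    fun A => ?_, fun A => ?_, fun e he => ?_⟩
  · obtain rfl | hA := eq_or_ne A A₀
    · simpa only [Function.update_self] using hinsert
    · simpa only [Function.update_of_ne hA] using (hBF A).trans (erase_subset _ _)
  · obtain rfl | hA := eq_or_ne A A₀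
    · simpa only [Function.update_self] using (hthin A).insert hinsert hnot
    · simpa only [Function.update_of_ne hA] using hthin A
  · simp only [mem_union, mem_biUnion]
    obtain rfl | hne := eq_or_ne e e₀
    · exact .inr ⟨A₀, hA₀, by simp⟩
    obtain heR | heB := mem_union.1 (hcover (mem_erase.2 ⟨hne, he⟩))
    · exact .inl heR
    obtain ⟨A, hA, heA⟩ := mem_biUnion.1 heB
    refine .inr ⟨A, hA, ?_⟩
    obtain rfl | hAA₀ := eq_or_ne A A₀
    · simpa only [Function.update_self] using mem_insert_of_mem heA
    · simpa only [Function.update_of_ne hAA₀] using heA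

lemma IsThin.exists_subset (hB : IsThin s col A B) : ∃ B' ⊆ B, #B ≤ s * #B' ∧
    ∀ e ∈ B', ∀ f ∈ B', colorPart col e A = colorPart col f A → e ∩ f ≠ colorPart col e A := by
  obtain rfl | ⟨e₀, he₀⟩ := B.eq_empty_or_nonempty
  · exact ⟨∅, Subset.rfl, by simp, by simp⟩
  have : Nonempty α := by
    obtain ⟨W, -, hW⟩ := hB (colorPart col e₀ A)
    obtain ⟨w, -⟩ := not_disjoint_iff.1 (hW e₀ he₀ rfl)
    exact ⟨w⟩
  have hpopular : ∀ p, ∃ w,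
      #{e ∈ B | colorPart col e A = p} ≤
        s * #{e ∈ {e ∈ B | colorPart col e A = p} | w ∈ e \ p} := by
    intro p
    obtain ⟨W, hWs, hW⟩ := hB p
    refine exists_card_le_mul_card_filter_mem hWs fun e he => ?_
    exact hW e (mem_filter.1 he).1 (mem_filter.1 he).2
  choose w hw using hpopular
  set B' := {e ∈ B | w (colorPart col e A) ∈ e \ colorPart col e A} with hB'
  refine ⟨B', filter_subset _ _, ?_, fun e he f hf hef hinter => ?_⟩
  · have hmaps (C : Finset (Finset α)) (hC : C ⊆ B) : (C : Set (Finset α)).MapsTo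
        (colorPart col · A) (B.image (colorPart col · A)) := fun e he =>
      mem_image_of_mem (colorPart col · A) (hC he)
    rw [card_eq_sum_card_fiberwise (hmaps B Subset.rfl),
      card_eq_sum_card_fiberwise (hmaps B' (filter_subset _ _)), mul_sum]
    refine sum_le_sum fun p _ => (hw p).trans_eq ?_
    congr 2
    ext e
    simp only [hB', mem_filter]
    constructor
    · rintro ⟨⟨he, rfl⟩, hwe⟩
      exact ⟨⟨he, hwe⟩, rfl⟩
    · rintro ⟨⟨he, hwe⟩, rfl⟩
      exact ⟨⟨he, rfl⟩, hwe⟩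
  · have hwe := mem_sdiff.1 (mem_filter.1 he).2
    have hwf := mem_sdiff.1 (mem_filter.1 hf).2
    rw [← hef] at hwf
    refine hwe.2 ?_
    rw [← hinter] at hwe hwf ⊢
    exact mem_inter.2 ⟨hwe.1, hwf.1⟩

theorem exists_isHomogeneous [Fintype κ] (hs : 0 < s) (J : Finset (Finset κ))
    (F : Finset (Finset α)) (hinj : ∀ e ∈ F, Set.InjOn col e)
    (hJ : ∀ e ∈ F, ∀ f ∈ F, e ≠ f → (e ∩ f).image col ∈ J) :
    ∃ F' ⊆ F, ∃ J' ⊆ J, #F ≤ 2 * (2 * 2 ^ Fintype.card κ * s) ^ #J * #F' ∧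
      IsHomogeneous_s5 s col J' F' := by
  induction J using Finset.strongInduction generalizing F with
  | H J ih =>
  set C := 2 * 2 ^ Fintype.card κ * s with hC
  have hCpos : 0 < C := by positivity
  obtain ⟨R, hRF, hR, B, hBF, hthin, hcover⟩ := exists_robust_core s col J F
  by_cases hRcard : #F ≤ 2 * #R
  · refine ⟨R, hRF, J, Subset.rfl, hRcard.trans ?_, fun e he f hf => hJ e (hRF he) f (hRF hf), hR⟩
    exact Nat.mul_le_mul_right _ (Nat.le_mul_of_pos_right 2 (Nat.pow_pos hCpos))
  -- A large thin part contains a large subfamily in which the intersection type `A` never occurs.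
  obtain ⟨A, hA, hFA⟩ :=
    exists_card_le_mul_card_of_subset_union_biUnion hcover (not_le.1 hRcard)
  have hJcard : #J ≤ 2 ^ Fintype.card κ := (card_le_univ J).trans_eq Fintype.card_finset
  obtain ⟨B', hB'B, hB'card, hB'inter⟩ := (hthin A).exists_subset
  have hB'F : B' ⊆ F := hB'B.trans (hBF A)
  have hJ' : ∀ e ∈ B', ∀ f ∈ B', e ≠ f → (e ∩ f).image col ∈ J.erase A := by
    intro e he f hf hef
    refine mem_erase.2 ⟨?_, hJ e (hB'F he) f (hB'F hf) hef⟩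
    rintro rfl
    have hpe := colorPart_image_inter (f := f) (hinj e (hB'F he))
    have hpf := colorPart_image_inter (f := e) (hinj f (hB'F hf))
    rw [inter_comm f e] at hpf
    exact hB'inter e he f hf (hpe.trans hpf.symm) hpe.symm
  obtain ⟨F', hF', J', hJ'J, hcard, hhom⟩ :=
    ih _ (erase_ssubset hA) B' (fun e he => hinj e (hB'F he)) hJ'
  refine ⟨F', hF'.trans hB'F, J', hJ'J.trans (erase_subset _ _), ?_, hhom⟩
  calc #F ≤ 2 * #J * #(B A) := hFA
    _ ≤ 2 * 2 ^ Fintype.card κ * (s * #B') := by gcongr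
    _ ≤ 2 * 2 ^ Fintype.card κ * (s * (2 * C ^ #(J.erase A) * #F')) := by gcongr
    _ = 2 * C ^ (#(J.erase A) + 1) * #F' := by rw [hC]; ring
    _ = 2 * C ^ #J * #F' := by rw [card_erase_add_one hA]

lemma IsHomogeneous_s5.inter_mem {k : ℕ} (h : IsHomogeneous_s5 s col J F) (hs : 2 * k ≤ s)
    (hF : (F : Set (Finset α)).Sized k) (hsurj : ∀ e ∈ F, Set.SurjOn col e Set.univ)
    (hne : F.Nonempty) (hA : A ∈ J) (hA' : A' ∈ J) : A ∩ A' ∈ J := by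
  obtain ⟨e, he⟩ := hne
  obtain ⟨f, hf, hAf, hfe⟩ := h.isRobustKernel A hA e he e (by rw [hF he]; omega)
  obtain ⟨g, hg, hAg, hge⟩ := h.isRobustKernel A' hA' e he (e ∪ f) (by
    have := card_union_le e f
    rw [hF he, hF hf] at this
    omega)
  have hfg : f ∩ g = colorPart col e (A ∩ A') := by
    ext x
    rw [mem_inter, mem_colorPart, mem_inter]
    constructor
    · rintro ⟨hxf, hxg⟩
      have hxA' : x ∈ colorPart col e A' := by
        by_contra hx
        exact disjoint_left.1 hge (mem_sdiff.2 ⟨hxg, hx⟩) (mem_union_right e hxf)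
      have hxe := mem_colorPart.1 hxA'
      have hxA : x ∈ colorPart col e A := by
        by_contra hx
        exact disjoint_left.1 hfe (mem_sdiff.2 ⟨hxf, hx⟩) hxe.1
      exact ⟨hxe.1, (mem_colorPart.1 hxA).2, hxe.2⟩
    · rintro ⟨hxe, hxA, hxA'⟩
      exact ⟨hAf (mem_colorPart.2 ⟨hxe, hxA⟩), hAg (mem_colorPart.2 ⟨hxe, hxA'⟩)⟩
  have himage : (f ∩ g).image col = A ∩ A' := hfg ▸ image_colorPart (hsurj e he)
  obtain rfl | hne := eq_or_ne f g
  · have huniv : ∀ a, a ∈ A ∩ A' := fun a => by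
      obtain ⟨v, hv, rfl⟩ := hsurj f hf (Set.mem_univ a)
      rw [← himage, inter_self]
      exact mem_image_of_mem col hv
    have hAA' : A ∩ A' = A := inter_eq_left.2 fun a _ => (mem_inter.1 (huniv a)).2
    rwa [hAA']
  · exact himage ▸ h.image_inter_mem f hf g hg hne

lemma LoosePath.exists_cons_colorPart {k m : ℕ} {p U : Finset α} (h : LoosePath F m p U)
    (hF : (F : Set (Finset α)).Sized k) (hsurj : ∀ e ∈ F, Set.SurjOn col e Set.univ)
    (hA : A.Nonempty) (hA' : A'.Nonempty) (hdisj : Disjoint A A')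
    (hrobust : ∀ e ∈ F, IsRobustKernel s F (colorPart col e A)) (hs : k * m ≤ s)
    (he : e ∈ F) (hep : colorPart col e A ⊆ p) :
    ∃ f ∈ F, ∃ q V, LoosePath F (m + 1) q V ∧ colorPart col f A' ⊆ q := by
  obtain ⟨f, hf, hef, hfU⟩ := hrobust e he U ((h.card_le hF).trans hs)
  have hinter : f ∩ U ⊆ colorPart col e A := fun x hx => by
    by_contra hxe
    exact disjoint_left.1 hfU (mem_sdiff.2 ⟨(mem_inter.1 hx).1, hxe⟩) (mem_inter.1 hx).2
  have hnew : colorPart col f A' ⊆ f \ U := fun x hx => by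
    obtain ⟨hxf, hxA'⟩ := mem_colorPart.1 hx
    refine mem_sdiff.2 ⟨hxf, fun hxU => ?_⟩
    exact disjoint_left.1 hdisj (mem_colorPart.1 (hinter (mem_inter.2 ⟨hxf, hxU⟩))).2 hxA'
  have hpart {C : Finset κ} (hC : C.Nonempty) {g : Finset α} (hg : g ∈ F) :
      (colorPart col g C).Nonempty := by
    rwa [← image_nonempty (f := col), image_colorPart (hsurj g hg)]
  have hmeet : (f ∩ U).Nonempty :=
    (hpart hA he).mono (subset_inter hef (hep.trans h.subset))
  refine ⟨f, hf, _, _, h.cons hf hmeet (hinter.trans hep) fun hfsub => ?_, hnew⟩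
  rw [sdiff_eq_empty_iff_subset.2 hfsub] at hnew
  exact (hpart hA' hf).ne_empty (subset_empty.1 hnew)

lemma exists_loosePath_of_disjoint_robust {k m : ℕ} (hF : (F : Set (Finset α)).Sized k)
    (hsurj : ∀ e ∈ F, Set.SurjOn col e Set.univ) (hne : F.Nonempty)
    (hA : A.Nonempty) (hA' : A'.Nonempty) (hdisj : Disjoint A A')
    (hrobust : ∀ e ∈ F, IsRobustKernel s F (colorPart col e A))
    (hrobust' : ∀ e ∈ F, IsRobustKernel s F (colorPart col e A')) (hs : k * m ≤ s) :
    ∃ e ∈ F, ∃ p U, LoosePath F (m + 1) p U ∧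
      (colorPart col e A ⊆ p ∨ colorPart col e A' ⊆ p) := by
  induction m with
  | zero =>
    obtain ⟨e, he⟩ := hne
    exact ⟨e, he, e, e, .single he, .inl colorPart_subset⟩
  | succ m ih =>
    obtain ⟨e, he, p, U, h, hep | hep⟩ := ih ((Nat.mul_le_mul_left k m.le_succ).trans hs)
    · obtain ⟨f, hf, q, V, hq, hfq⟩ :=
        h.exists_cons_colorPart hF hsurj hA hA' hdisj hrobust hs he hep
      exact ⟨f, hf, q, V, hq, .inr hfq⟩
    · obtain ⟨f, hf, q, V, hq, hfq⟩ :=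
        h.exists_cons_colorPart hF hsurj hA' hA hdisj.symm hrobust' hs he hep
      exact ⟨f, hf, q, V, hq, .inl hfq⟩

lemma IsHomogeneous_s5.exists_mem_of_loosePathFree [Nonempty κ] {k ℓ : ℕ}
    (h : IsHomogeneous_s5 (k * ℓ) col J F) (hℓ : 2 ≤ ℓ) (hF : (F : Set (Finset α)).Sized k)
    (hsurj : ∀ e ∈ F, Set.SurjOn col e Set.univ) (hne : F.Nonempty) (hfree : LoosePathFree ℓ F) :
    ∃ x, ∀ A ∈ J, A.Nonempty → x ∈ A := by
  obtain hJ | hJ := {A ∈ J | A.Nonempty}.eq_empty_or_nonempty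
  · refine ⟨Classical.arbitrary κ, fun A hA hAne => ?_⟩
    exact absurd (mem_filter.2 ⟨hA, hAne⟩) (hJ ▸ notMem_empty A)
  obtain ⟨A, hA, hmin⟩ := exists_min_image _ card hJ
  obtain ⟨hAJ, x, hx⟩ := mem_filter.1 hA
  refine ⟨x, fun A' hA'J hA' => ?_⟩
  have hmeet : (A ∩ A').Nonempty := by
    rw [← not_disjoint_iff_nonempty_inter]
    intro hdisj
    obtain ⟨-, -, p, U, hpath, -⟩ := exists_loosePath_of_disjoint_robust (m := ℓ - 1) hF hsurj hne
      ⟨x, hx⟩ hA' hdisj (h.isRobustKernel A hAJ) (h.isRobustKernel A' hA'J)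
      (Nat.mul_le_mul_left k (Nat.sub_le ℓ 1))
    rw [Nat.sub_add_cancel (one_le_two.trans hℓ)] at hpath
    exact hfree p U hpath
  have hinter : A ∩ A' ∈ J := h.inter_mem (by rw [mul_comm]; gcongr) hF hsurj hne hAJ hA'J
  have heq : A ∩ A' = A :=
    eq_of_subset_of_card_le inter_subset_left (hmin _ (mem_filter.2 ⟨hinter, hmeet⟩))
  exact (mem_inter.1 (heq.symm ▸ hx)).2

end Homogeneous

section Stars

variable {α : Type*} {F : Finset (Finset α)} {k r ℓ : ℕ}

open scoped Classical in
lemma pow_card_le_mul_card_injOn [Fintype α] {e : Finset α} (he : #e = k) :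
    k ^ Fintype.card α ≤ k ^ k * #{c : α → Fin k | Set.InjOn c e} := by
  let σ : e ≃ Fin k := e.equivFinOfCardEq he
  -- A colouring is encoded by its values on `e`, and by itself recoloured injectively on `e`.
  have hcard : #(univ : Finset (α → Fin k)) ≤
      #((univ : Finset (Fin k → Fin k)) ×ˢ
        univ.filter fun c : α → Fin k => Set.InjOn c e) := by
    refine card_le_card_of_injOn
      (fun c => (fun i => c (σ.symm i), fun v => if h : v ∈ e then σ ⟨v, h⟩ else c v)) ?_ ?_
    · intro c _
      simp only [coe_product, coe_univ, coe_filter, mem_univ, true_and, Set.mem_prod, Set.mem_univ,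
        Set.mem_ofPred_eq]
      intro v hv w hw hvw
      rw [mem_coe] at hv hw
      simp only [hv, hw, dif_pos] at hvw
      simpa using σ.injective hvw
    · intro c _ d _ hcd
      rw [Prod.mk.injEq] at hcd
      funext v
      by_cases hv : v ∈ e
      · simpa using congrFun hcd.1 (σ ⟨v, hv⟩)
      · simpa [hv] using congrFun hcd.2 v
  simpa [card_product] using hcard

open scoped Classical in
lemma exists_coloring_card_le [Finite α] (hk : 0 < k) (hF : (F : Set (Finset α)).Sized k) :
    ∃ col : α → Fin k, #F ≤ k ^ k * #(F.filter fun e : Finset α => Set.InjOn col e) := by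
  have := Fintype.ofFinite α
  have : Nonempty (Fin k) := ⟨⟨0, hk⟩⟩
  have hsum : ∑ _c : α → Fin k, #F ≤
      ∑ c : α → Fin k, k ^ k * #(F.filter fun e : Finset α => Set.InjOn c e) := by
    calc ∑ _c : α → Fin k, #F = ∑ _e ∈ F, k ^ Fintype.card α := by simp [mul_comm]
      _ ≤ ∑ e ∈ F, k ^ k * #{c : α → Fin k | Set.InjOn c e} :=
        sum_le_sum fun e he => pow_card_le_mul_card_injOn (hF he)
      _ = ∑ c : α → Fin k, k ^ k * #(F.filter fun e : Finset α => Set.InjOn c e) := by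
        simp only [← mul_sum, card_filter]
        rw [sum_comm]
  obtain ⟨col, -, hcol⟩ := exists_le_of_sum_le univ_nonempty hsum
  exact ⟨col, hcol⟩

lemma card_le_choose_of_forall_mem [DecidableEq α] {V : Finset α} {v : α}
    (hF : (F : Set (Finset α)).Sized (r + 1)) (hV : ∀ e ∈ F, e ⊆ V) (hv : ∀ e ∈ F, v ∈ e) :
    #F ≤ (#(V.erase v)).choose r := by
  rw [← card_powersetCard]
  refine card_le_card_of_injOn (fun e => e.erase v) (fun e he => ?_) fun e he f hf hef => ?_
  · rw [mem_coe, mem_powersetCard]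
    exact ⟨erase_subset_erase v (hV e he), by rw [card_erase_of_mem (hv e he), hF he]; rfl⟩
  · rw [← insert_erase (hv e he), ← insert_erase (hv f hf), show e.erase v = f.erase v from hef]

lemma card_le_pow_of_forall_mem {V : Finset α} {v : α} (hF : (F : Set (Finset α)).Sized (r + 1))
    (hV : ∀ e ∈ F, e ⊆ V) (hv : ∀ e ∈ F, v ∈ e) : #F ≤ #V ^ r := by
  classical
  calc #F ≤ (#(V.erase v)).choose r := card_le_choose_of_forall_mem hF hV hv
    _ ≤ #(V.erase v) ^ r := Nat.choose_le_pow _ _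
    _ ≤ #V ^ r := Nat.pow_le_pow_left (card_le_card (erase_subset v V)) r

variable [DecidableEq α]

/-- The map `center` exhibits `F` as a vertex-disjoint union of stars. -/
structure IsCenterMap (center : Finset α → α) (F : Finset (Finset α)) : Prop where
  mem : ∀ e ∈ F, center e ∈ e
  eq_of_inter_nonempty : ∀ e ∈ F, ∀ f ∈ F, (e ∩ f).Nonempty → center e = center f

/-- The factor lost when passing to a union of disjoint stars: `k ^ k` for making the edges rainbow,
the rest for making the family homogeneous with robustness `k * ℓ`. -/
def starConstant (k ℓ : ℕ) : ℕ :=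
  k ^ k * (2 * (2 * 2 ^ k * (k * ℓ)) ^ 2 ^ k)

theorem exists_isCenterMap [Finite α] (hk : 0 < k) (hℓ : 2 ≤ ℓ)
    (hF : (F : Set (Finset α)).Sized k) (hne : F.Nonempty) (hfree : LoosePathFree ℓ F) :
    ∃ F' ⊆ F, #F ≤ starConstant k ℓ * #F' ∧ ∃ center, IsCenterMap center F' := by
  classical
  obtain ⟨col, hcol⟩ := exists_coloring_card_le hk hF
  obtain ⟨F', hF'sub, J, -, hcard, hhom⟩ := exists_isHomogeneous (s := k * ℓ) (col := col)
    (Nat.mul_pos hk (by omega)) univ (F.filter fun e : Finset α => Set.InjOn col e)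
    (fun e he => (mem_filter.1 he).2) (fun _ _ _ _ _ => mem_univ _)
  rw [card_univ, Fintype.card_finset, Fintype.card_fin] at hcard
  have hF'F : F' ⊆ F := hF'sub.trans (filter_subset _ _)
  have hF' : (F' : Set (Finset α)).Sized k := hF.mono (coe_subset.2 hF'F)
  have hinj : ∀ e ∈ F', Set.InjOn col e := fun e he => (mem_filter.1 (hF'sub he)).2
  have hsurj : ∀ e ∈ F', Set.SurjOn col e Set.univ := fun e he => by
    have huniv : e.image col = univ := eq_univ_of_card _ <| by
      rw [card_image_of_injOn (hinj e he), hF' he, Fintype.card_fin]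
    rw [Set.SurjOn, ← coe_image, huniv, coe_univ]
  have hFF' : #F ≤ starConstant k ℓ * #F' := by
    rw [starConstant, mul_assoc]
    exact hcol.trans (Nat.mul_le_mul_left _ hcard)
  have hF'ne : F'.Nonempty := by
    rw [← card_pos]
    exact pos_of_mul_pos_right ((card_pos.2 hne).trans_le hFF') (Nat.zero_le _)
  have : Nonempty (Fin k) := ⟨⟨0, hk⟩⟩
  obtain ⟨x, hx⟩ :=
    hhom.exists_mem_of_loosePathFree hℓ hF' hsurj hF'ne (hfree.subset hF'F)
  have hcenter : ∀ e, ∃ v, e ∈ F' → v ∈ e ∧ col v = x := fun e => by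
    by_cases he : e ∈ F'
    · obtain ⟨v, hv, hvx⟩ := hsurj e he (Set.mem_univ x)
      exact ⟨v, fun _ => ⟨hv, hvx⟩⟩
    · obtain ⟨f, hf⟩ := hF'ne
      obtain ⟨v, -⟩ := hsurj f hf (Set.mem_univ x)
      exact ⟨v, fun he' => absurd he' he⟩
  choose center hcenter using hcenter
  refine ⟨F', hF'F, hFF', center, fun e he => (hcenter e he).1, fun e he f hf hmeet => ?_⟩
  obtain rfl | hef := eq_or_ne e f
  · rfl
  obtain ⟨w, hw, hwx⟩ := mem_image.1 (hx _ (hhom.image_inter_mem e he f hf hef) (hmeet.image col))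
  rw [mem_inter] at hw
  rw [hinj e he (hcenter e he).1 hw.1 ((hcenter e he).2.trans hwx.symm),
    hinj f hf (hcenter f hf).1 hw.2 ((hcenter f hf).2.trans hwx.symm)]

lemma IsCenterMap.exists_card_sq_le {center : Finset α → α} {V : Finset α} (hr : 2 ≤ r)
    (hc : IsCenterMap center F) (hF : (F : Set (Finset α)).Sized (r + 1)) (hV : ∀ e ∈ F, e ⊆ V)
    (hne : F.Nonempty) : ∃ v, #F ^ 2 ≤ #{e ∈ F | v ∈ e} * #V ^ r := by
  let star v := {e ∈ F | center e = v}
  let supp v := (star v).biUnion id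
  have hsupp v : supp v ⊆ V := biUnion_subset.2 fun e he => hV e (mem_filter.1 he).1
  have hdisj : (F.image center : Set α).PairwiseDisjoint supp := by
    intro v _ w _ hvw
    refine disjoint_left.2 fun y hyv hyw => hvw ?_
    obtain ⟨e, he, hye⟩ := mem_biUnion.1 hyv
    obtain ⟨f, hf, hyf⟩ := mem_biUnion.1 hyw
    obtain ⟨heF, rfl⟩ := mem_filter.1 he
    obtain ⟨hfF, rfl⟩ := mem_filter.1 hf
    exact hc.eq_of_inter_nonempty e heF f hfF ⟨y, mem_inter.2 ⟨hye, hyf⟩⟩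
  have hsum : ∑ v ∈ F.image center, #(supp v) ≤ #V := by
    rw [← card_biUnion hdisj]
    exact card_le_card (biUnion_subset.2 fun v _ => hsupp v)
  obtain ⟨v, hv, hle⟩ : ∃ v ∈ F.image center, #F * #(supp v) ≤ #(star v) * #V := by
    refine exists_le_of_sum_le (hne.image center) ?_
    rw [← mul_sum, ← sum_mul, ← card_eq_sum_card_image]
    exact Nat.mul_le_mul_left _ hsum
  obtain ⟨e, he, rfl⟩ := mem_image.1 hv
  set v := center e
  have hstarpos : 0 < #(star v) := card_pos.2 ⟨e, mem_filter.2 ⟨he, rfl⟩⟩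
  have hmem : ∀ f ∈ star v, v ∈ f := fun f hf => by
    rw [← (mem_filter.1 hf).2]
    exact hc.mem f (mem_filter.1 hf).1
  have hstar : #(star v) ≤ #(supp v) ^ r :=
    card_le_pow_of_forall_mem (hF.mono (coe_subset.2 (filter_subset _ F)))
      (fun f hf => subset_biUnion_of_mem id hf) hmem
  refine ⟨v, ?_⟩
  have hsq : #F ^ 2 ≤ #(star v) * #V ^ r := by
    obtain ⟨q, rfl⟩ := Nat.exists_eq_add_of_le hr
    refine Nat.le_of_mul_le_mul_right ?_ hstarpos
    calc #F ^ 2 * #(star v) ≤ #F ^ 2 * #(supp v) ^ (2 + q) := by gcongr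
      _ = (#F * #(supp v)) ^ 2 * #(supp v) ^ q := by ring
      _ ≤ (#(star v) * #V) ^ 2 * #V ^ q := by gcongr; exact hsupp v
      _ = #(star v) * #V ^ (2 + q) * #(star v) := by ring
  refine hsq.trans (Nat.mul_le_mul_right _ (card_le_card fun f hf => ?_))
  exact mem_filter.2 ⟨(mem_filter.1 hf).1, hmem f hf⟩

theorem LoosePathFree.exists_card_sq_le [Finite α] {V : Finset α} (hfree : LoosePathFree ℓ F)
    (hr : 2 ≤ r) (hℓ : 2 ≤ ℓ) (hF : (F : Set (Finset α)).Sized (r + 1)) (hV : ∀ e ∈ F, e ⊆ V)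
    (hne : F.Nonempty) :
    ∃ v, #F ^ 2 ≤ starConstant (r + 1) ℓ ^ 2 * #{e ∈ F | v ∈ e} * #V ^ r := by
  obtain ⟨F', hF'F, hcard, center, hc⟩ := exists_isCenterMap r.succ_pos hℓ hF hne hfree
  have hF'ne : F'.Nonempty := by
    rw [← card_pos]
    exact pos_of_mul_pos_right ((card_pos.2 hne).trans_le hcard) (Nat.zero_le _)
  obtain ⟨v, hv⟩ := hc.exists_card_sq_le hr (hF.mono (coe_subset.2 hF'F))
    (fun e he => hV e (hF'F he)) hF'ne
  refine ⟨v, ?_⟩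
  calc #F ^ 2 ≤ (starConstant (r + 1) ℓ * #F') ^ 2 := by gcongr
    _ = starConstant (r + 1) ℓ ^ 2 * #F' ^ 2 := mul_pow ..
    _ ≤ starConstant (r + 1) ℓ ^ 2 * (#{e ∈ F' | v ∈ e} * #V ^ r) := by gcongr
    _ ≤ starConstant (r + 1) ℓ ^ 2 * (#{e ∈ F | v ∈ e} * #V ^ r) := by gcongr
    _ = starConstant (r + 1) ℓ ^ 2 * #{e ∈ F | v ∈ e} * #V ^ r := (mul_assoc ..).symm

theorem LoosePathFree.card_le [Finite α] {V : Finset α} (hfree : LoosePathFree ℓ F)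
    (hr : 2 ≤ r) (hℓ : 2 ≤ ℓ) (hF : (F : Set (Finset α)).Sized (r + 1)) (hV : ∀ e ∈ F, e ⊆ V) :
    #F ≤ starConstant (r + 1) ℓ ^ 2 * #V ^ r := by
  obtain rfl | hne := F.eq_empty_or_nonempty
  · simp
  obtain ⟨v, hv⟩ := hfree.exists_card_sq_le hr hℓ hF hV hne
  refine Nat.le_of_mul_le_mul_right ?_ (card_pos.2 hne)
  calc #F * #F = #F ^ 2 := (sq _).symm
    _ ≤ starConstant (r + 1) ℓ ^ 2 * #{e ∈ F | v ∈ e} * #V ^ r := hv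
    _ ≤ starConstant (r + 1) ℓ ^ 2 * #F * #V ^ r := by gcongr; exact filter_subset _ F
    _ = starConstant (r + 1) ℓ ^ 2 * #V ^ r * #F := by ring

lemma card_mul_le_mul_card_of_forall_le_mul_degree {X : Finset α} {M N : ℕ}
    (hF : (F : Set (Finset α)).Sized k) (h : ∀ v ∈ X, N ≤ M * #{e ∈ F | v ∈ e}) :
    #X * N ≤ M * (k * #F) := by
  have hdeg : ∑ v ∈ X, #{e ∈ F | v ∈ e} ≤ k * #F :=
    calc ∑ v ∈ X, #{e ∈ F | v ∈ e} = ∑ e ∈ F, #{v ∈ X | v ∈ e} :=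
          sum_card_bipartiteAbove_eq_sum_card_bipartiteBelow (fun (v : α) e => v ∈ e)
      _ ≤ ∑ _e ∈ F, k := sum_le_sum fun e he =>
        (card_le_card fun _ hv => (mem_filter.1 hv).2).trans_eq (hF he)
      _ = k * #F := by rw [sum_const, smul_eq_mul, mul_comm]
  calc #X * N ≤ ∑ v ∈ X, M * #{e ∈ F | v ∈ e} := card_nsmul_le_sum _ _ _ h
    _ ≤ M * (k * #F) := by
      rw [← mul_sum]
      exact Nat.mul_le_mul_left M hdeg

theorem LoosePathFree.exists_heavy_set [Fintype α] [Nonempty α] (hfree : LoosePathFree ℓ F)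
    (hr : 2 ≤ r) (hℓ : 2 ≤ ℓ) (hF : (F : Set (Finset α)).Sized (r + 1)) (K : ℕ) :
    ∃ S : Finset α, #S ≤ starConstant (r + 1) ℓ ^ 4 * K ^ 2 * (r + 1) ∧
      K * #{e ∈ F | Disjoint e S} ≤ Fintype.card α ^ r := by
  set c := starConstant (r + 1) ℓ
  set N := Fintype.card α ^ r
  have hN : 0 < N := Nat.pow_pos Fintype.card_pos
  set S : Finset α := {v | N ≤ c ^ 2 * K ^ 2 * #{e ∈ F | v ∈ e}}
  refine ⟨S, ?_, ?_⟩
  · refine Nat.le_of_mul_le_mul_right ?_ hN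
    calc #S * N ≤ c ^ 2 * K ^ 2 * ((r + 1) * #F) :=
          card_mul_le_mul_card_of_forall_le_mul_degree hF fun v hv => (mem_filter.1 hv).2
      _ ≤ c ^ 2 * K ^ 2 * ((r + 1) * (c ^ 2 * N)) := by
        gcongr
        exact hfree.card_le hr hℓ hF fun e _ => subset_univ e
      _ = c ^ 4 * K ^ 2 * (r + 1) * N := by ring
  · by_contra! hlt
    set F₀ := {e ∈ F | Disjoint e S}
    have hF₀F : F₀ ⊆ F := filter_subset _ F
    have hne : F₀.Nonempty := card_pos.1 (pos_of_mul_pos_right (hN.trans hlt) (Nat.zero_le K))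
    obtain ⟨v, hv⟩ := (hfree.subset hF₀F).exists_card_sq_le hr hℓ (hF.mono (coe_subset.2 hF₀F))
      (fun e _ => subset_univ e) hne
    have hheavy : N < c ^ 2 * K ^ 2 * #{e ∈ F₀ | v ∈ e} := by
      refine Nat.lt_of_mul_lt_mul_right (a := N) ?_
      calc N * N < (K * #F₀) * (K * #F₀) := Nat.mul_lt_mul'' hlt hlt
        _ = K ^ 2 * #F₀ ^ 2 := by ring
        _ ≤ K ^ 2 * (c ^ 2 * #{e ∈ F₀ | v ∈ e} * N) := Nat.mul_le_mul_left _ hv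
        _ = c ^ 2 * K ^ 2 * #{e ∈ F₀ | v ∈ e} * N := by ring
    obtain ⟨e, he⟩ := card_pos.1 (pos_of_mul_pos_right (hN.trans hheavy) (Nat.zero_le _))
    obtain ⟨heF₀, hve⟩ := mem_filter.1 he
    have hvS : v ∈ S := mem_filter.2 ⟨mem_univ v, hheavy.le.trans (by gcongr)⟩
    exact disjoint_left.1 (mem_filter.1 heF₀).2 hve hvS

end Stars

section LinkPaths

variable {α : Type*} [DecidableEq α] {F G G' : Finset (Finset α)} {A B S S' : Finset α}
  {k m s t : ℕ} {a b v w : α}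

/-- `G` is a family of nonempty sets each of which extends to a member of `F` by every vertex of
`S`, and which is rich enough to provide a member avoiding any given `s` vertices. -/
structure IsCommonLink (s : ℕ) (F : Finset (Finset α)) (S : Finset α) (G : Finset (Finset α)) :
    Prop where
  isRobustKernel : IsRobustKernel s G ∅
  nonempty : ∀ T ∈ G, T.Nonempty
  insert_mem : ∀ v ∈ S, ∀ T ∈ G, insert v T ∈ F

/-- The number of vertices a link must be able to avoid when a loose path is built greedily: all
those of a `k`-uniform loose path of length `2 * t + 2`, and `t` further ones. -/
def pathBudget (k t : ℕ) : ℕ :=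
  k * (2 * t + 2) + t

lemma IsCommonLink.exists_disjoint (h : IsCommonLink s F S G) {W : Finset α} (hW : #W ≤ s) :
    ∃ T ∈ G, Disjoint T W := by
  obtain ⟨T, hT, -, hdisj⟩ := h.isRobustKernel W hW
  exact ⟨T, hT, by rwa [sdiff_empty] at hdisj⟩

lemma LoosePath.exists_cons_pair {p U W : Finset α} (h : LoosePath F m p U) (hb : b ∈ p)
    (hv : v ∉ U) (hvb : IsRobustKernel s F {v, b}) (hs : #(U ∪ W) ≤ s) :
    ∃ f, v ∈ f ∧ Disjoint (f \ {v, b}) W ∧ LoosePath F (m + 1) (f \ U) (f ∪ U) := by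
  obtain ⟨f, hf, hsub, hdisj⟩ := hvb (U ∪ W) hs
  obtain ⟨hvf, hbf⟩ : v ∈ f ∧ b ∈ f := by simpa [insert_subset_iff] using hsub
  rw [disjoint_union_right] at hdisj
  refine ⟨f, hvf, hdisj.2,
    h.cons hf ⟨b, mem_inter.2 ⟨hbf, h.subset hb⟩⟩ (fun x hx => ?_) fun hfU => hv (hfU hvf)⟩
  obtain ⟨hxf, hxU⟩ := mem_inter.1 hx
  have hxvb : x ∈ ({v, b} : Finset α) := by
    by_contra hxvb
    exact disjoint_left.1 hdisj.1 (mem_sdiff.2 ⟨hxf, hxvb⟩) hxU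
  obtain rfl | rfl : x = v ∨ x = b := by simpa using hxvb
  · exact absurd hxU hv
  · exact hb

-- Each vertex of `X` lengthens the path by two edges that share a link `T ∈ G`.
lemma LoosePath.exists_zigzag {p U W X : Finset α} (h : LoosePath F m p U)
    (hF : (F : Set (Finset α)).Sized k) (hG : IsCommonLink s F (insert v X) G) (hv : v ∈ p)
    (hUW : Disjoint U W) (hXW : X ⊆ W) (hs : k * (m + 2 * #X) + #W ≤ s) :
    ∃ u ∈ insert v X, ∃ q V, LoosePath F (m + 2 * #X) q V ∧ u ∈ q ∧ Disjoint V (W \ X) := by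
  induction X using Finset.induction with
  | empty => exact ⟨v, mem_insert_self .., p, U, h, hv, by rwa [sdiff_empty]⟩
  | insert x X hxX ih =>
    rw [card_insert_of_notMem hxX] at hs ⊢
    have hsub : insert v X ⊆ insert v (insert x X) := insert_subset_insert v (subset_insert x X)
    have hs' : k * (m + 2 * #X) + #W ≤ s :=
      (Nat.add_le_add_right (Nat.mul_le_mul_left k (by omega)) _).trans hs
    obtain ⟨u, hu, q, V, hq, huq, hVW⟩ := ih
      ⟨hG.isRobustKernel, hG.nonempty, fun y hy => hG.insert_mem y (hsub hy)⟩
      ((subset_insert x X).trans hXW) hs'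
    obtain ⟨T, hT, hTVW⟩ := hG.exists_disjoint (W := V ∪ W) <|
      (card_union_le V W).trans ((Nat.add_le_add_right (hq.card_le hF) _).trans hs')
    rw [disjoint_union_right] at hTVW
    have hxW : x ∈ W := hXW (mem_insert_self x X)
    have hx : x ∉ T ∪ V := by
      rw [mem_union, not_or]
      exact ⟨fun hxT => disjoint_left.1 hTVW.2 hxT hxW,
        fun hxV => disjoint_left.1 hVW hxV (mem_sdiff.2 ⟨hxW, hxX⟩)⟩
    have hpath := (hq.insert_new huq (hG.nonempty T hT) hTVW.1
      (hG.insert_mem u (hsub hu) T hT)).insert_private (hG.nonempty T hT) Subset.rfl hx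
      (hG.insert_mem x (by simp) T hT)
    refine ⟨x, by simp, _, _, hpath, mem_singleton_self x, ?_⟩
    rw [disjoint_insert_left, disjoint_union_left]
    exact ⟨by simp, hTVW.2.mono_right sdiff_subset,
      hVW.mono_right (sdiff_subset_sdiff Subset.rfl (subset_insert x X))⟩

lemma LoosePath.exists_zigzag_erase {p U X : Finset α} (h : LoosePath F m p U)
    (hF : (F : Set (Finset α)).Sized k) (hG : IsCommonLink s F S G) (hS : #S = t + 1) (hv : v ∈ S)
    (hvp : v ∈ p) (hUX : Disjoint U (S.erase v ∪ X)) (hSX : Disjoint S X)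
    (hs : k * (m + 2 * t) + (t + #X) ≤ s) :
    ∃ u ∈ S, ∃ q V, LoosePath F (m + 2 * t) q V ∧ u ∈ q ∧ Disjoint V X := by
  have hcard : #(S.erase v) = t := by rw [card_erase_of_mem hv, hS, Nat.add_sub_cancel]
  have hW : #(S.erase v ∪ X) ≤ t + #X := (card_union_le _ _).trans_eq (by rw [hcard])
  obtain ⟨u, hu, q, V, hq, huq, hVX⟩ := h.exists_zigzag (X := S.erase v) (W := S.erase v ∪ X) hF
    (by rwa [insert_erase hv]) hvp hUX subset_union_left
    (by rw [hcard]; exact (Nat.add_le_add_left hW _).trans hs)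
  rw [insert_erase hv] at hu
  rw [hcard] at hq
  rw [union_sdiff_cancel_left (hSX.mono_left (erase_subset v S))] at hVX
  exact ⟨u, hu, q, V, hq, huq, hVX⟩

lemma IsCommonLink.exists_loosePath {X : Finset α} (hF : (F : Set (Finset α)).Sized k)
    (hG : IsCommonLink s F S G) (hS : #S = t + 1) (hSX : Disjoint S X)
    (hs : k * (1 + 2 * t) + (t + 1 + #X) ≤ s) :
    ∃ u ∈ S, ∃ q V, LoosePath F (1 + 2 * t) q V ∧ u ∈ q ∧ Disjoint V X := by
  obtain ⟨v, hv⟩ : S.Nonempty := card_pos.1 (by omega)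
  have hSXcard := card_union_le S X
  obtain ⟨T, hT, hTSX⟩ := hG.exists_disjoint (W := S ∪ X) (by omega)
  refine (LoosePath.single (hG.insert_mem v hv T hT)).exists_zigzag_erase hF hG hS hv
    (mem_insert_self v T) ?_ hSX (by omega)
  rw [disjoint_insert_left, mem_union, not_or]
  exact ⟨⟨notMem_erase v S, fun hvX => disjoint_left.1 hSX hv hvX⟩,
    hTSX.mono_right (union_subset_union_left (erase_subset v S))⟩

lemma IsCommonLink.not_loosePathFree_of_card (hF : (F : Set (Finset α)).Sized k) (hk : 0 < k)
    (hG : IsCommonLink (pathBudget k t) F S G) (hS : #S = t + 1) :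
    ¬ LoosePathFree (2 * t + 2) F := by
  intro hfree
  have hbudget : pathBudget k t = k * (1 + 2 * t) + t + k := by unfold pathBudget; ring
  obtain ⟨u, hu, q, V, hq, huq, -⟩ := hG.exists_loosePath hF hS (disjoint_empty_right S)
    (by rw [hbudget, card_empty]; omega)
  obtain ⟨T, hT, hTV⟩ := hG.exists_disjoint (W := V)
    ((hq.card_le hF).trans (by rw [hbudget]; omega))
  have hlong := hq.insert_new huq (hG.nonempty T hT) hTV (hG.insert_mem u hu T hT)
  rw [show 1 + 2 * t + 1 = 2 * t + 2 by ring] at hlong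
  exact hfree _ _ hlong

lemma LoosePath.exists_cons_links {q V T U : Finset α} {u : α} (hq : LoosePath F m q V)
    (huq : u ∈ q) (hF : (F : Set (Finset α)).Sized k) (hT : insert u T ∈ F)
    (hTU : (T ∩ U).Nonempty) (hG' : IsCommonLink s F S' G') (hU : U ∈ G') (hw : w ∈ S')
    (hwT : w ∉ T) (hV : Disjoint V (insert w U ∪ T)) (hs : k * (m + 2) ≤ s) :
    ∃ q' V', LoosePath F (m + 3) q' V' := by
  have hTV : Disjoint T V := hV.symm.mono_left subset_union_right
  have hUV : ∀ x ∈ insert w U, x ∉ V := fun x hx hxV =>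
    disjoint_left.1 hV hxV (mem_union_left T hx)
  have hwV : w ∉ T ∪ V := by
    rw [mem_union, not_or]
    exact ⟨hwT, hUV w (mem_insert_self w U)⟩
  obtain ⟨x, hx⟩ := hTU
  obtain ⟨hxT, hxU⟩ := mem_inter.1 hx
  have hpath := (hq.insert_new huq ⟨x, hxT⟩ hTV hT).cons (hG'.insert_mem w hw U hU)
    ⟨x, mem_inter.2 ⟨mem_insert_of_mem hxU, mem_union_left V hxT⟩⟩
    (fun y hy => (mem_union.1 (mem_inter.1 hy).2).resolve_right (hUV y (mem_inter.1 hy).1))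
    (fun hsub => hwV (hsub (mem_insert_self w U)))
  obtain ⟨U', hU', hU'disj⟩ := hG'.exists_disjoint ((hpath.card_le hF).trans hs)
  exact ⟨_, _, hpath.insert_new (mem_sdiff.2 ⟨mem_insert_self w U, hwV⟩) (hG'.nonempty U' hU')
    hU'disj (hG'.insert_mem w hw U' hU')⟩

lemma IsCommonLink.not_loosePathFree_of_inter_nonempty (hF : (F : Set (Finset α)).Sized k)
    (ht : 1 ≤ t) (hG : IsCommonLink (pathBudget k t) F S G) (hS : #S = t)
    (hG' : IsCommonLink (pathBudget k t) F S' G') {T U : Finset α} (hT : T ∈ G) (hU : U ∈ G')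
    (hTU : (T ∩ U).Nonempty) (hTS : Disjoint (T ∪ U) S) (hw : w ∈ S' \ S) (hwT : w ∉ T) :
    ¬ LoosePathFree (2 * t + 2) F := by
  intro hfree
  obtain ⟨hwS', hwS⟩ := mem_sdiff.1 hw
  obtain ⟨t, rfl⟩ := Nat.exists_eq_add_of_le' ht
  have hbudget : pathBudget k (t + 1) = k * (1 + 2 * t) + t + 1 + 3 * k := by
    unfold pathBudget; ring
  have hcard : #(insert w U ∪ T) ≤ 2 * k := by
    obtain ⟨v, hv⟩ : S.Nonempty := card_pos.1 (by omega)
    have hUk : #(insert w U) = k := hF (hG'.insert_mem w hwS' U hU)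
    have hTk : #T ≤ k := (card_le_card (subset_insert v T)).trans_eq (hF (hG.insert_mem v hv T hT))
    exact (card_union_le _ _).trans (by omega)
  have hdisj : Disjoint S (insert w U ∪ T) := by
    rw [disjoint_union_left] at hTS
    rw [disjoint_union_right, disjoint_insert_right]
    exact ⟨⟨hwS, hTS.2.symm⟩, hTS.1.symm⟩
  obtain ⟨u, hu, q, V, hq, huq, hV⟩ := hG.exists_loosePath hF hS hdisj (by rw [hbudget]; omega)
  obtain ⟨_, _, hlong⟩ := hq.exists_cons_links huq hF (hG.insert_mem u hu T hT) hTU hG' hU hwS'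
    hwT hV (by rw [hbudget, mul_add]; omega)
  rw [show 1 + 2 * t + 3 = 2 * (t + 1) + 2 by ring] at hlong
  exact hfree _ _ hlong

lemma LoosePath.exists_cons_pair_disjoint {p U X : Finset α} (h : LoosePath F m p U) (ha : a ∈ p)
    (hv : v ∈ S) (hUS : Disjoint U S) (hUX : Disjoint U X) (hSX : Disjoint S X)
    (hva : IsRobustKernel s F {v, a}) (hs : #(U ∪ (S ∪ X)) ≤ s) :
    ∃ p' U', LoosePath F (m + 1) p' U' ∧ v ∈ p' ∧ Disjoint U' (S.erase v ∪ X) := by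
  have haU : a ∈ U := h.subset ha
  have hvU : v ∉ U := fun hvU => disjoint_left.1 hUS hvU hv
  obtain ⟨f, hvf, hfSX, hpath⟩ := h.exists_cons_pair ha hvU hva hs
  refine ⟨_, _, hpath, mem_sdiff.2 ⟨hvf, hvU⟩, disjoint_union_left.2
    ⟨disjoint_left.2 fun x hxf hx => ?_,
      disjoint_union_right.2 ⟨hUS.mono_right (erase_subset v S), hUX⟩⟩⟩
  refine disjoint_left.1 hfSX (mem_sdiff.2 ⟨hxf, ?_⟩)
    (union_subset_union_left (erase_subset v S) hx)
  rw [mem_insert, mem_singleton]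
  rintro (rfl | rfl) <;> obtain hx | hx := mem_union.1 hx
  · exact notMem_erase x S hx
  · exact disjoint_left.1 hSX hv hx
  · exact disjoint_left.1 hUS haU (mem_of_mem_erase hx)
  · exact disjoint_left.1 hUX haU hx

lemma IsCommonLink.not_loosePathFree_of_robust_sdiff (hF : (F : Set (Finset α)).Sized k)
    (ht : 1 ≤ t) (hG : IsCommonLink (pathBudget k t) F S G) (hS : #S = t) (hA : A ∈ F) (hB : B ∈ F)
    (hAS : Disjoint A S) (hBS : Disjoint B S) (hAB : (B ∩ A).Nonempty) (hb : b ∈ B \ A)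
    (hrobust : ∀ v ∈ S, IsRobustKernel (pathBudget k t) F {v, b}) :
    ¬ LoosePathFree (2 * t + 2) F := by
  intro hfree
  obtain ⟨v, hv⟩ : S.Nonempty := card_pos.1 (by omega)
  obtain ⟨t, rfl⟩ := Nat.exists_eq_add_of_le' ht
  have hbudget : pathBudget k (t + 1) = k * (2 + 1 + 2 * t) + t + 1 + k := by
    unfold pathBudget; ring
  have hstart : LoosePath F 2 (B \ A) (B ∪ A) := (LoosePath.single hA).cons hB hAB
    inter_subset_right fun hBA => (mem_sdiff.1 hb).2 (hBA (mem_sdiff.1 hb).1)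
  obtain ⟨p, U, hpath, hvp, hdisj⟩ := hstart.exists_cons_pair_disjoint (X := ∅) hb hv
    (disjoint_union_left.2 ⟨hBS, hAS⟩) (disjoint_empty_right _) (disjoint_empty_right _)
    (hrobust v hv) (by
      have hcard := hstart.card_le hF
      have hunion := card_union_le (B ∪ A) S
      rw [union_empty, hbudget, mul_add, mul_add]
      omega)
  obtain ⟨u, hu, q, V, hq, huq, -⟩ := hpath.exists_zigzag_erase hF hG hS hv hvp hdisj
    (disjoint_empty_right S) (by rw [hbudget, card_empty]; omega)
  obtain ⟨T, hT, hTV⟩ := hG.exists_disjoint (W := V) ((hq.card_le hF).trans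
    (by rw [hbudget]; omega))
  have hlong := hq.insert_new huq (hG.nonempty T hT) hTV (hG.insert_mem u hu T hT)
  rw [show 2 + 1 + 2 * t + 1 = 2 * (t + 1) + 2 by ring] at hlong
  exact hfree _ _ hlong

lemma LoosePath.exists_cons_pair_cons {q V : Finset α} {u : α} (hq : LoosePath F m q V)
    (huq : u ∈ q) (hB : B ∈ F) (hb : b ∈ B) (hB1 : 1 < #B) (hVB : Disjoint V B)
    (hub : IsRobustKernel s F {b, u}) (hs : #(V ∪ B) ≤ s) :
    ∃ q' V', LoosePath F (m + 2) q' V' := by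
  have hbV : b ∉ V := fun hbV => disjoint_left.1 hVB hbV hb
  obtain ⟨g, hbg, hgB, hpath⟩ := hq.exists_cons_pair huq hbV hub hs
  have hBinter : B ∩ (g ∪ V) ⊆ {b} := fun x hx => by
    obtain ⟨hxB, hx⟩ := mem_inter.1 hx
    by_contra hxb
    have hxV : x ∉ V := fun hxV => disjoint_left.1 hVB hxV hxB
    refine disjoint_left.1 hgB (mem_sdiff.2 ⟨(mem_union.1 hx).resolve_right hxV, ?_⟩) hxB
    rw [mem_insert, not_or]
    exact ⟨fun h => hxb (mem_singleton.2 h),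
      fun h => hxV (mem_singleton.1 h ▸ hq.subset huq)⟩
  refine ⟨_, _, hpath.cons hB ⟨b, mem_inter.2 ⟨hb, mem_union_left V hbg⟩⟩
    (hBinter.trans (singleton_subset_iff.2 (mem_sdiff.2 ⟨hbg, hbV⟩))) fun hsub => ?_⟩
  have hle := card_le_card hBinter
  rw [inter_eq_left.2 hsub, card_singleton] at hle
  omega

lemma IsCommonLink.not_loosePathFree_of_disjoint_robust (hF : (F : Set (Finset α)).Sized k)
    (hk : 2 ≤ k) (ht : 1 ≤ t) (hG : IsCommonLink (pathBudget k t) F S G) (hS : #S = t)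
    (hA : A ∈ F) (hB : B ∈ F) (hAS : Disjoint A S) (hBS : Disjoint B S) (hAB : Disjoint A B)
    (ha : a ∈ A) (hb : b ∈ B) (hrobust : ∀ v ∈ S, IsRobustKernel (pathBudget k t) F {v, a})
    (hrobust' : ∀ v ∈ S, IsRobustKernel (pathBudget k t) F {v, b}) :
    ¬ LoosePathFree (2 * t + 2) F := by
  intro hfree
  obtain ⟨v, hv⟩ : S.Nonempty := card_pos.1 (by omega)
  obtain ⟨t, rfl⟩ := Nat.exists_eq_add_of_le' ht
  have hbudget : pathBudget k (t + 1) = k * (1 + 1 + 2 * t) + t + 1 + 2 * k := by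
    unfold pathBudget; ring
  have hAk : #A = k := hF hA
  have hBk : #B = k := hF hB
  obtain ⟨p, U, hpath, hvp, hdisj⟩ := (LoosePath.single hA).exists_cons_pair_disjoint (X := B) ha hv
    hAS hAB hBS.symm (hrobust v hv) (by
      have hASB := card_union_le A (S ∪ B)
      have hSB := card_union_le S B
      rw [hbudget, mul_add, mul_add]
      omega)
  obtain ⟨u, hu, q, V, hq, huq, hVB⟩ := hpath.exists_zigzag_erase hF hG hS hv hvp hdisj
    hBS.symm (by rw [hbudget]; omega)
  obtain ⟨_, _, hlong⟩ := hq.exists_cons_pair_cons huq hB hb (by omega) hVB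
    (by rw [pair_comm]; exact hrobust' u hu) (by
      have hVBcard := card_union_le V B
      have hVcard := hq.card_le hF
      rw [hbudget]
      omega)
  rw [show 1 + 1 + 2 * t + 2 = 2 * (t + 1) + 2 by ring] at hlong
  exact hfree _ _ hlong

end LinkPaths

section Counting

lemma choose_succ_eq_choose_sub_add_sum {n t : ℕ} (d : ℕ) (ht : t ≤ n) :
    n.choose (d + 1) = (n - t).choose (d + 1) + ∑ i ∈ Icc 1 t, (n - i).choose d := by
  induction t with
  | zero => simp
  | succ t ih =>
    obtain ⟨m, rfl⟩ := Nat.exists_eq_add_of_le ht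
    rw [sum_Icc_succ_top (by omega), ih (by omega), show t + 1 + m - t = m + 1 by omega,
      show t + 1 + m - (t + 1) = m by omega, Nat.choose_succ_succ']
    ring

lemma choose_succ_le_choose_sub_add_mul_pow {n t : ℕ} (d : ℕ) (ht : t ≤ n) :
    n.choose (d + 1) ≤ (n - t).choose (d + 1) + t * n ^ d := by
  rw [choose_succ_eq_choose_sub_add_sum d ht]
  refine Nat.add_le_add_left ((sum_le_card_nsmul _ _ (n ^ d) fun i _ => ?_).trans_eq (by simp)) _
  exact (Nat.choose_le_pow _ _).trans (Nat.pow_le_pow_left (Nat.sub_le n i) d)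

lemma mul_choose_sub_le_sum_choose (n d t : ℕ) :
    t * (n - t).choose d ≤ ∑ i ∈ Icc 1 t, (n - i).choose d := by
  have h := card_nsmul_le_sum (Icc 1 t) (fun i => (n - i).choose d) ((n - t).choose d)
    fun i hi => Nat.choose_le_choose d (Nat.sub_le_sub_left (mem_Icc.1 hi).2 n)
  simpa using h

/-- A bound on the ratio of `n ^ r` to `(n - a).choose r` that holds for `r ≤ k`, once `n` is large
compared with `a` and `r`. -/
def chooseConstant (k : ℕ) : ℕ :=
  2 ^ k * k.factorial

lemma pow_le_chooseConstant_mul_choose {k r a n : ℕ} (hr : r ≤ k) (hn : 2 * (a + r) ≤ n) :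
    n ^ r ≤ chooseConstant k * (n - a).choose r := by
  have hfact : (n - a + 1 - r) ^ r ≤ r.factorial * (n - a).choose r := by
    rw [← Nat.descFactorial_eq_factorial_mul_choose]
    exact Nat.pow_sub_le_descFactorial (n - a) r
  calc n ^ r ≤ (2 * (n - a + 1 - r)) ^ r := Nat.pow_le_pow_left (by omega) r
    _ = 2 ^ r * (n - a + 1 - r) ^ r := mul_pow ..
    _ ≤ 2 ^ k * (k.factorial * (n - a).choose r) :=
      Nat.mul_le_mul (Nat.pow_le_pow_right two_pos hr)
        (hfact.trans (Nat.mul_le_mul_right _ (Nat.factorial_le hr)))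
    _ = chooseConstant k * (n - a).choose r := (mul_assoc ..).symm

lemma card_filter_card_fiber_le {ι β : Type*} [DecidableEq β] {P : Finset ι} {R : Finset β}
    {f : ι → β} (hf : ∀ i ∈ P, f i ∈ R) (m : ℕ) :
    #{i ∈ P | #{j ∈ P | f j = f i} ≤ m} ≤ #R * m := by
  rw [mul_comm]
  refine card_le_mul_card_image_of_maps_to (f := f) (fun i hi => hf i (mem_filter.1 hi).1) m
    fun b _ => ?_
  obtain hempty | ⟨i, hi⟩ :=
    (filter (f · = b) {i ∈ P | #{j ∈ P | f j = f i} ≤ m}).eq_empty_or_nonempty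
  · simp [hempty]
  · obtain ⟨hsmall, rfl⟩ := mem_filter.1 hi
    exact (card_le_card (filter_subset_filter _ (filter_subset _ _))).trans
      (mem_filter.1 hsmall).2

variable {α : Type*} {S V W : Finset α} {F G : Finset (Finset α)} {d s : ℕ} {v : α}

lemma card_filter_subset_powersetCard [DecidableEq α] {p : Finset α} (hp : p ⊆ V) (r : ℕ) :
    #{T ∈ powersetCard (#p + r) V | p ⊆ T} = (#V - #p).choose r := by
  rw [← card_sdiff_of_subset hp, ← card_powersetCard]
  refine card_nbij' (· \ p) (· ∪ p) (fun T hT => ?_) (fun T hT => ?_) (fun T hT => ?_)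
    (fun T hT => ?_)
  · obtain ⟨hT, hpT⟩ := mem_filter.1 hT
    obtain ⟨hTV, hTcard⟩ := mem_powersetCard.1 hT
    exact mem_powersetCard.2 ⟨sdiff_subset_sdiff hTV Subset.rfl, by
      rw [card_sdiff_of_subset hpT, hTcard, Nat.add_sub_cancel_left]⟩
  · obtain ⟨hTV, hTcard⟩ := mem_powersetCard.1 hT
    refine mem_filter.2 ⟨mem_powersetCard.2 ⟨union_subset (hTV.trans sdiff_subset) hp, ?_⟩,
      subset_union_right⟩
    rw [card_union_of_disjoint (sdiff_disjoint.mono_left hTV), hTcard, add_comm]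
  · exact sdiff_union_of_subset (mem_filter.1 hT).2
  · exact union_sdiff_cancel_right (sdiff_disjoint.mono_left (mem_powersetCard.1 hT).1)

lemma card_le_mul_pow_of_forall_not_disjoint (hG : (G : Set (Finset α)).Sized (d + 1))
    (hV : ∀ T ∈ G, T ⊆ V) (hW : ∀ T ∈ G, ¬ Disjoint T W) : #G ≤ #W * #V ^ d := by
  classical
  have hcover : G ⊆ W.biUnion fun w => {T ∈ G | w ∈ T} := fun T hT => by
    obtain ⟨w, hwT, hwW⟩ := not_disjoint_iff.1 (hW T hT)
    exact mem_biUnion.2 ⟨w, hwW, mem_filter.2 ⟨hT, hwT⟩⟩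
  refine (card_le_card hcover).trans (card_biUnion_le_card_mul _ _ _ fun w _ => ?_)
  exact card_le_pow_of_forall_mem (hG.mono (coe_subset.2 (filter_subset _ _)))
    (fun T hT => hV T (mem_filter.1 hT).1) fun T hT => (mem_filter.1 hT).2

variable [DecidableEq α]

/-- The vertices of `S` that extend `T` to a member of `F`. -/
def extenders (F : Finset (Finset α)) (S T : Finset α) : Finset α :=
  {v ∈ S | insert v T ∈ F}

lemma mem_extenders {T : Finset α} : v ∈ extenders F S T ↔ v ∈ S ∧ insert v T ∈ F :=
  mem_filter

lemma extenders_subset (F : Finset (Finset α)) (S T : Finset α) : extenders F S T ⊆ S :=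
  filter_subset _ _

variable [Fintype α]

lemma isRobustKernel_empty_of_lt_card (hG : (G : Set (Finset α)).Sized (d + 1))
    (h : s * Fintype.card α ^ d < #G) : IsRobustKernel s G ∅ := by
  intro W hW
  by_contra! hmeet
  have hle : #G ≤ #W * Fintype.card α ^ d :=
    card_le_mul_pow_of_forall_not_disjoint hG (fun T _ => subset_univ T)
      fun T hT => by simpa using hmeet T hT
  exact (hle.trans (Nat.mul_le_mul_right _ hW)).not_gt h

lemma card_le_mul_pow_of_forall_not_disjoint_erase (hF : (F : Set (Finset α)).Sized (d + 2))
    (hv : ∀ e ∈ F, v ∈ e) (hW : ∀ e ∈ F, ¬ Disjoint (e.erase v) W) :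
    #F ≤ #W * Fintype.card α ^ d := by
  rw [← card_image_of_injOn ((erase_injOn' v).mono hv)]
  refine card_le_mul_pow_of_forall_not_disjoint ?_ (fun T _ => subset_univ T) ?_
  · intro T hT
    obtain ⟨e, he, rfl⟩ := mem_image.1 hT
    rw [card_erase_of_mem (hv e he), hF he]
    rfl
  · intro T hT
    obtain ⟨e, he, rfl⟩ := mem_image.1 hT
    exact hW e he

lemma card_filter_disjoint_erase_le_sum_card_extenders (hF : (F : Set (Finset α)).Sized (d + 1))
    (S : Finset α) :
    #{e ∈ F | ∃ v ∈ S, v ∈ e ∧ Disjoint (e.erase v) S} ≤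
      ∑ T ∈ powersetCard d Sᶜ, #(extenders F S T) := by
  rw [← card_sigma]
  refine (card_le_card fun e he => ?_).trans (card_image_le (f := fun x => insert x.2 x.1))
  obtain ⟨he, v, hvS, hve, hdisj⟩ := mem_filter.1 he
  refine mem_image.2 ⟨⟨e.erase v, v⟩, mem_sigma.2 ⟨mem_powersetCard.2 ⟨?_, ?_⟩, ?_⟩,
    insert_erase hve⟩
  · exact le_compl_iff_disjoint_right.2 hdisj
  · rw [card_erase_of_mem hve, hF he, Nat.add_sub_cancel]
  · exact mem_extenders.2 ⟨hvS, by rwa [insert_erase hve]⟩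

lemma card_filter_not_disjoint_erase_le (hF : (F : Set (Finset α)).Sized (d + 2)) (S : Finset α) :
    #{e ∈ F | ∃ v ∈ S, v ∈ e ∧ ¬ Disjoint (e.erase v) S} ≤ #S ^ 2 * Fintype.card α ^ d := by
  have hcover : {e ∈ F | ∃ v ∈ S, v ∈ e ∧ ¬ Disjoint (e.erase v) S} ⊆
      S.biUnion fun v => {e ∈ F | v ∈ e ∧ ¬ Disjoint (e.erase v) S} := fun e he => by
    obtain ⟨he, v, hvS, hv⟩ := mem_filter.1 he
    exact mem_biUnion.2 ⟨v, hvS, mem_filter.2 ⟨he, hv⟩⟩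
  rw [sq, mul_assoc]
  refine (card_le_card hcover).trans (card_biUnion_le_card_mul _ _ _ fun v _ => ?_)
  exact card_le_mul_pow_of_forall_not_disjoint_erase
    (hF.mono (coe_subset.2 (filter_subset _ _))) (fun e he => (mem_filter.1 he).2.1)
    fun e he => (mem_filter.1 he).2.2

lemma card_le_card_disjoint_add_sum_card_extenders (hF : (F : Set (Finset α)).Sized (d + 2))
    (S : Finset α) :
    #F ≤ #{e ∈ F | Disjoint e S} + ∑ T ∈ powersetCard (d + 1) Sᶜ, #(extenders F S T) +
      #S ^ 2 * Fintype.card α ^ d := by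
  have hcover : F ⊆ {e ∈ F | Disjoint e S} ∪
      {e ∈ F | ∃ v ∈ S, v ∈ e ∧ Disjoint (e.erase v) S} ∪
      {e ∈ F | ∃ v ∈ S, v ∈ e ∧ ¬ Disjoint (e.erase v) S} := fun e he => by
    simp only [mem_union, mem_filter, he, true_and]
    by_cases heS : Disjoint e S
    · exact Or.inl (Or.inl heS)
    · obtain ⟨v, hve, hvS⟩ := not_disjoint_iff.1 heS
      by_cases hdisj : Disjoint (e.erase v) S
      · exact Or.inl (Or.inr ⟨v, hvS, hve, hdisj⟩)
      · exact Or.inr ⟨v, hvS, hve, hdisj⟩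
  refine (card_le_card hcover).trans ((card_union_le _ _).trans
    (Nat.add_le_add ((card_union_le _ _).trans (Nat.add_le_add_left ?_ _)) ?_))
  · exact card_filter_disjoint_erase_le_sum_card_extenders hF S
  · exact card_filter_not_disjoint_erase_le hF S

end Counting

section Connectivity

variable {α β : Type*} [DecidableEq α] {V : Finset α} {E : Finset (Finset α)} {r : ℕ} {x : α}

/-- The vertices `y ≠ x` of `V` such that every `r`-subset of `V` containing both `x` and `y` lies
in the exceptional family `E`. -/
def nonNeighbors (r : ℕ) (V : Finset α) (E : Finset (Finset α)) (x : α) : Finset α :=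
  {y ∈ V.erase x | ∀ T ∈ powersetCard r V \ E, x ∈ T → y ∉ T}

lemma exists_mem_of_notMem_nonNeighbors {y : α} (hy : y ∈ V.erase x)
    (hyx : y ∉ nonNeighbors r V E x) : ∃ T ∈ powersetCard r V \ E, x ∈ T ∧ y ∈ T := by
  by_contra! h
  exact hyx (mem_filter.2 ⟨hy, h⟩)

lemma exists_mem_card_mul_degree_le (hV : V.Nonempty) (hE : (E : Set (Finset α)).Sized r) :
    ∃ x ∈ V, #V * #{T ∈ E | x ∈ T} ≤ r * #E := by
  obtain ⟨x, hx, hmin⟩ := exists_min_image V (fun x => #{T ∈ E | x ∈ T}) hV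
  refine ⟨x, hx, ?_⟩
  rw [← one_mul (r * #E)]
  exact card_mul_le_mul_card_of_forall_le_mul_degree hE fun y hy => by
    rw [one_mul]
    exact hmin y hy

lemma card_nonNeighbors_mul_choose_le (hE : (E : Set (Finset α)).Sized (r + 2)) (hx : x ∈ V) :
    #(nonNeighbors (r + 2) V E x) * (#V - 2).choose r ≤ (r + 2) * #{T ∈ E | x ∈ T} := by
  rw [← one_mul ((r + 2) * _)]
  refine card_mul_le_mul_card_of_forall_le_mul_degree
    (hE.mono (coe_subset.2 (filter_subset _ E))) fun y hy => ?_
  obtain ⟨hyV, hyx⟩ := mem_filter.1 hy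
  obtain ⟨hne, hyV⟩ := mem_erase.1 hyV
  have hpair : #{x, y} = 2 := card_pair hne.symm
  have hcount := card_filter_subset_powersetCard
    (show {x, y} ⊆ V from insert_subset hx (singleton_subset_iff.2 hyV)) r
  rw [hpair, add_comm 2 r] at hcount
  rw [one_mul, ← hcount]
  refine card_le_card fun T hT => ?_
  obtain ⟨hT, hxyT⟩ := mem_filter.1 hT
  obtain ⟨hxT, hyT⟩ : x ∈ T ∧ y ∈ T := by simpa [insert_subset_iff] using hxyT
  have hTE : T ∈ E := by
    by_contra hTE
    exact hyx T (mem_sdiff.2 ⟨hT, hTE⟩) hxT hyT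
  exact mem_filter.2 ⟨mem_filter.2 ⟨hTE, hxT⟩, hyT⟩

lemma exists_card_nonNeighbors_mul_pow_le (hE : (E : Set (Finset α)).Sized (r + 2))
    (hV : 2 * (r + 2) ≤ #V) : ∃ x ∈ V, #(nonNeighbors (r + 2) V E x) * #V ^ (r + 1) ≤
      chooseConstant (r + 2) * (r + 2) ^ 2 * #E := by
  have hVpos : 0 < #V := by omega
  obtain ⟨x, hx, hdeg⟩ := exists_mem_card_mul_degree_le (card_pos.1 hVpos) hE
  refine ⟨x, hx, ?_⟩
  set q := chooseConstant (r + 2)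
  set Y := nonNeighbors (r + 2) V E x
  calc #Y * #V ^ (r + 1) = #Y * #V ^ r * #V := by ring
    _ ≤ #Y * (q * (#V - 2).choose r) * #V := by
      gcongr
      exact pow_le_chooseConstant_mul_choose (by omega) (by omega)
    _ = q * #V * (#Y * (#V - 2).choose r) := by ring
    _ ≤ q * #V * ((r + 2) * #{T ∈ E | x ∈ T}) :=
      Nat.mul_le_mul_left _ (card_nonNeighbors_mul_choose_le hE hx)
    _ = q * (r + 2) * (#V * #{T ∈ E | x ∈ T}) := by ring
    _ ≤ q * (r + 2) * ((r + 2) * #E) := Nat.mul_le_mul_left _ hdeg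
    _ = q * (r + 2) ^ 2 * #E := by ring

-- For a vertex `x` of small degree in `E`, any set avoiding the non-neighbours of `x` is linked to
-- the sets through `x` by a chain of intersecting sets outside `E`.
theorem exists_card_filter_ne_le_of_inter_nonempty [DecidableEq β] {f : Finset α → β}
    (hE : (E : Set (Finset α)).Sized (r + 2)) (hV : 2 * (r + 2) ≤ #V)
    (hcard : 2 * (chooseConstant (r + 2) * (r + 2) ^ 2 * #E) ≤ #V ^ (r + 2))
    (hf : ∀ T ∈ powersetCard (r + 2) V \ E, ∀ U ∈ powersetCard (r + 2) V \ E,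
      (T ∩ U).Nonempty → f T = f U) :
    ∃ T₀ ∈ powersetCard (r + 2) V \ E, #{T ∈ powersetCard (r + 2) V \ E | f T ≠ f T₀} ≤
      chooseConstant (r + 2) * (r + 2) ^ 2 * #E := by
  obtain ⟨x, hx, hY⟩ := exists_card_nonNeighbors_mul_pow_le hE hV
  set Y := nonNeighbors (r + 2) V E x
  have hVpos : 0 < #V := by omega
  have hY2 : 2 * #Y ≤ #V := by
    refine Nat.le_of_mul_le_mul_right (c := #V ^ (r + 1)) ?_ (Nat.pow_pos hVpos)
    rw [mul_assoc, ← pow_succ']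
    exact (Nat.mul_le_mul_left 2 hY).trans hcard
  obtain ⟨y, hyV, hyY⟩ : ∃ y ∈ V.erase x, y ∉ Y := by
    refine exists_mem_notMem_of_card_lt_card ?_
    rw [card_erase_of_mem hx]
    omega
  obtain ⟨T₀, hT₀, hxT₀, -⟩ := exists_mem_of_notMem_nonNeighbors hyV hyY
  refine ⟨T₀, hT₀, le_trans ?_ hY⟩
  have hsub : ∀ T ∈ {T ∈ powersetCard (r + 2) V \ E | f T ≠ f T₀}, T ⊆ V ∧ #T = r + 2 :=
    fun T hT => mem_powersetCard.1 (mem_sdiff.1 (mem_filter.1 hT).1).1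
  refine card_le_mul_pow_of_forall_not_disjoint (fun T hT => (hsub T hT).2)
    (fun T hT => (hsub T hT).1) fun T hT hTY => ?_
  obtain ⟨hTV, hTcard⟩ := hsub T hT
  obtain ⟨hT, hne⟩ := mem_filter.1 hT
  obtain ⟨z, hz⟩ : T.Nonempty := card_pos.1 (by omega)
  have hfx : ∀ U ∈ powersetCard (r + 2) V \ E, x ∈ U → f U = f T₀ := fun U hU hxU =>
    hf U hU T₀ hT₀ ⟨x, mem_inter.2 ⟨hxU, hxT₀⟩⟩
  obtain rfl | hzx := eq_or_ne z x
  · exact hne (hfx T hT hz)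
  · obtain ⟨U, hU, hxU, hzU⟩ := exists_mem_of_notMem_nonNeighbors
      (mem_erase.2 ⟨hzx, hTV hz⟩) (disjoint_left.1 hTY hz)
    exact hne ((hf T hT U hU ⟨z, mem_inter.2 ⟨hz, hzU⟩⟩).trans (hfx U hU hxU))

end Connectivity

section Stability

variable {α : Type*} [DecidableEq α] {F : Finset (Finset α)} {S T : Finset α} {d s t : ℕ}

lemma sum_card_extenders_add_card_filter_lt_le (F : Finset (Finset α)) (S : Finset α)
    (P : Finset (Finset α)) (t : ℕ) :
    ∑ T ∈ P, #(extenders F S T) + #{T ∈ P | #(extenders F S T) < t} ≤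
      t * #P + #S * #{T ∈ P | t < #(extenders F S T)} := by
  rw [card_filter, card_filter, mul_sum, ← sum_add_distrib, mul_comm t, ← smul_eq_mul,
    ← sum_const, ← sum_add_distrib]
  refine sum_le_sum fun T _ => ?_
  have hle := card_le_card (extenders_subset F S T)
  split_ifs <;> omega

variable [Fintype α]

/-- The `r`-sets outside `S` that are extended to members of `F` by the same vertices of `S` as
`T`. -/
def linkClass (r : ℕ) (F : Finset (Finset α)) (S T : Finset α) : Finset (Finset α) :=
  {U ∈ powersetCard r Sᶜ | extenders F S U = extenders F S T}

/-- The `(d + 1)`-sets outside `S` whose number of extenders is not `t`, or whose class is too small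
to avoid `s` given vertices. -/
def exceptionalLinks (d t s : ℕ) (F : Finset (Finset α)) (S : Finset α) : Finset (Finset α) :=
  {T ∈ powersetCard (d + 1) Sᶜ |
    #(extenders F S T) ≠ t ∨ #(linkClass (d + 1) F S T) ≤ s * Fintype.card α ^ d}

/-- The `r`-sets outside `S` that some vertex of `S` fails to extend to a member of `F`. -/
def missingLinks (r : ℕ) (F : Finset (Finset α)) (S : Finset α) : Finset (Finset α) :=
  {T ∈ powersetCard r Sᶜ | ∃ v ∈ S, insert v T ∉ F}

lemma IsCommonLink.of_lt_card {G : Finset (Finset α)} (hG : (G : Set (Finset α)).Sized (d + 1))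
    (hcard : s * Fintype.card α ^ d < #G) (hinsert : ∀ v ∈ S, ∀ T ∈ G, insert v T ∈ F) :
    IsCommonLink s F S G where
  isRobustKernel := isRobustKernel_empty_of_lt_card hG hcard
  nonempty T hT := card_pos.1 (by rw [hG hT]; exact d.succ_pos)
  insert_mem := hinsert

lemma isCommonLink_linkClass (h : s * Fintype.card α ^ d < #(linkClass (d + 1) F S T)) :
    IsCommonLink s F (extenders F S T) (linkClass (d + 1) F S T) := by
  refine .of_lt_card (fun U hU => (mem_powersetCard.1 (mem_filter.1 hU).1).2) h fun v hv U hU => ?_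
  rw [← (mem_filter.1 hU).2] at hv
  exact (mem_extenders.1 hv).2

lemma LoosePathFree.card_filter_lt_card_extenders_le (hfree : LoosePathFree (2 * t + 2) F)
    (hF : (F : Set (Finset α)).Sized (d + 2)) (S : Finset α) :
    #{T ∈ powersetCard (d + 1) Sᶜ | t < #(extenders F S T)} ≤
      2 ^ #S * (pathBudget (d + 2) t * Fintype.card α ^ d) := by
  set commonLinks : Finset α → Finset (Finset α) := fun S' =>
    {T ∈ powersetCard (d + 1) Sᶜ | ∀ v ∈ S', insert v T ∈ F}
  have hcover : {T ∈ powersetCard (d + 1) Sᶜ | t < #(extenders F S T)} ⊆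
      (powersetCard (t + 1) S).biUnion commonLinks := fun T hT => by
    obtain ⟨hT, hlt⟩ := mem_filter.1 hT
    obtain ⟨S', hS', hcard⟩ := exists_subset_card_eq (Nat.succ_le_of_lt hlt)
    exact mem_biUnion.2 ⟨S', mem_powersetCard.2 ⟨hS'.trans (extenders_subset F S T), hcard⟩,
      mem_filter.2 ⟨hT, fun v hv => (mem_extenders.1 (hS' hv)).2⟩⟩
  refine (card_le_card hcover).trans ((card_biUnion_le_card_mul _ _ _ fun S' hS' => ?_).trans
    (Nat.mul_le_mul_right _ ?_))
  · by_contra! hlarge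
    have hlink : IsCommonLink (pathBudget (d + 2) t) F S' (commonLinks S') :=
      .of_lt_card (fun T hT => (mem_powersetCard.1 (mem_filter.1 hT).1).2) hlarge
        fun v hv T hT => (mem_filter.1 hT).2 v hv
    exact hlink.not_loosePathFree_of_card hF (by omega) (mem_powersetCard.1 hS').2 hfree
  · rw [card_powersetCard]
    exact Nat.choose_le_two_pow _ _

lemma LoosePathFree.card_filter_card_extenders_lt_le (hfree : LoosePathFree (2 * t + 2) F)
    (hF : (F : Set (Finset α)).Sized (d + 2)) (ht : t ≤ Fintype.card α)
    (hcard : ∑ i ∈ Icc 1 t, (Fintype.card α - i).choose (d + 1) ≤ #F) (S : Finset α) :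
    #{T ∈ powersetCard (d + 1) Sᶜ | #(extenders F S T) < t} ≤ #{e ∈ F | Disjoint e S} +
      (#S * (2 ^ #S * pathBudget (d + 2) t) + #S ^ 2 + t ^ 2) * Fintype.card α ^ d := by
  have hgt := Nat.mul_le_mul_left #S (hfree.card_filter_lt_card_extenders_le hF S)
  have hedges := card_le_card_disjoint_add_sum_card_extenders hF S
  set n := Fintype.card α
  set P := powersetCard (d + 1) Sᶜ
  have hP : t * #P ≤ t * (n - t).choose (d + 1) + t ^ 2 * n ^ d := calc
    t * #P ≤ t * n.choose (d + 1) := by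
      rw [card_powersetCard]
      exact Nat.mul_le_mul_left _ (Nat.choose_le_choose _ (card_le_univ _))
    _ ≤ t * ((n - t).choose (d + 1) + t * n ^ d) :=
      Nat.mul_le_mul_left _ (choose_succ_le_choose_sub_add_mul_pow d ht)
    _ = _ := by ring
  have hsum := sum_card_extenders_add_card_filter_lt_le F S P t
  have hlower := mul_choose_sub_le_sum_choose n (d + 1) t
  have hexpand : (#S * (2 ^ #S * pathBudget (d + 2) t) + #S ^ 2 + t ^ 2) * n ^ d =
      #S * (2 ^ #S * (pathBudget (d + 2) t * n ^ d)) + #S ^ 2 * n ^ d + t ^ 2 * n ^ d := by ring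
  omega

/-- The coefficient of the lower-order term in `LoosePathFree.card_exceptionalLinks_le`. -/
def exceptionConstant (b s t : ℕ) : ℕ :=
  (b + 2) * (2 ^ b * s) + b ^ 2 + t ^ 2

lemma LoosePathFree.card_exceptionalLinks_le (hfree : LoosePathFree (2 * t + 2) F)
    (hF : (F : Set (Finset α)).Sized (d + 2)) (ht : t ≤ Fintype.card α)
    (hcard : ∑ i ∈ Icc 1 t, (Fintype.card α - i).choose (d + 1) ≤ #F) (S : Finset α) :
    #(exceptionalLinks d t (pathBudget (d + 2) t) F S) ≤ #{e ∈ F | Disjoint e S} +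
      exceptionConstant #S (pathBudget (d + 2) t) t * Fintype.card α ^ d := by
  set s := pathBudget (d + 2) t
  set P := powersetCard (d + 1) Sᶜ
  have hcover : exceptionalLinks d t s F S ⊆
      {T ∈ P | #(extenders F S T) < t} ∪ {T ∈ P | t < #(extenders F S T)} ∪
        {T ∈ P | #(linkClass (d + 1) F S T) ≤ s * Fintype.card α ^ d} := fun T hT => by
    obtain ⟨hT, hexc⟩ := mem_filter.1 hT
    rw [← lt_or_lt_iff_ne] at hexc
    simpa only [mem_union, mem_filter, P, hT, true_and] using hexc
  have hlt := hfree.card_filter_card_extenders_lt_le hF ht hcard S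
  have hgt := hfree.card_filter_lt_card_extenders_le hF S
  have hsmall : #{T ∈ P | #(linkClass (d + 1) F S T) ≤ s * Fintype.card α ^ d} ≤
      2 ^ #S * (s * Fintype.card α ^ d) := by
    rw [← card_powerset]
    exact card_filter_card_fiber_le (fun T _ => mem_powerset.2 (extenders_subset F S T)) _
  calc #(exceptionalLinks d t s F S) ≤ _ := (card_le_card hcover).trans
        ((card_union_le _ _).trans (Nat.add_le_add_right (card_union_le _ _) _))
    _ ≤ _ := Nat.add_le_add (Nat.add_le_add hlt hgt) hsmall
    _ = _ := by unfold exceptionConstant; ring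

lemma LoosePathFree.extenders_eq_of_inter_nonempty (hfree : LoosePathFree (2 * t + 2) F)
    (hF : (F : Set (Finset α)).Sized (d + 2)) (ht : 1 ≤ t) {T U : Finset α}
    (hT : T ∈ powersetCard (d + 1) Sᶜ \ exceptionalLinks d t (pathBudget (d + 2) t) F S)
    (hU : U ∈ powersetCard (d + 1) Sᶜ \ exceptionalLinks d t (pathBudget (d + 2) t) F S)
    (hTU : (T ∩ U).Nonempty) : extenders F S T = extenders F S U := by
  have hspec : ∀ {T}, T ∈ powersetCard (d + 1) Sᶜ \
      exceptionalLinks d t (pathBudget (d + 2) t) F S → Disjoint T S ∧ #(extenders F S T) = t ∧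
      T ∈ linkClass (d + 1) F S T ∧
      IsCommonLink (pathBudget (d + 2) t) F (extenders F S T) (linkClass (d + 1) F S T) := by
    intro T hT
    obtain ⟨hT, hexc⟩ := mem_sdiff.1 hT
    simp only [exceptionalLinks, mem_filter, hT, true_and, not_or, not_not, not_le] at hexc
    exact ⟨le_compl_iff_disjoint_right.1 (mem_powersetCard.1 hT).1, hexc.1,
      mem_filter.2 ⟨hT, rfl⟩, isCommonLink_linkClass hexc.2⟩
  obtain ⟨hTS, hTcard, hTmem, hTlink⟩ := hspec hT
  obtain ⟨hUS, hUcard, hUmem, hUlink⟩ := hspec hU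
  by_contra hne
  obtain ⟨w, hw⟩ : (extenders F S U \ extenders F S T).Nonempty := by
    rw [sdiff_nonempty]
    exact fun hsub => hne (eq_of_subset_of_card_le hsub (by omega)).symm
  refine hTlink.not_loosePathFree_of_inter_nonempty hF ht hTcard hUlink hTmem hUmem hTU ?_ hw ?_
    hfree
  · exact (disjoint_union_left.2 ⟨hTS, hUS⟩).mono_right (extenders_subset F S T)
  · exact disjoint_right.1 hTS (extenders_subset F S U (mem_sdiff.1 hw).1)

lemma card_missingLinks_extenders_le (d : ℕ) (F : Finset (Finset α)) (S T₀ : Finset α)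
    (E : Finset (Finset α)) :
    #(missingLinks (d + 1) F (extenders F S T₀)) ≤ #S * Fintype.card α ^ d + #E +
      #{T ∈ powersetCard (d + 1) Sᶜ \ E | extenders F S T ≠ extenders F S T₀} := by
  set M := missingLinks (d + 1) F (extenders F S T₀)
  have hM : ∀ T ∈ M, #T = d + 1 := fun T hT => (mem_powersetCard.1 (mem_filter.1 hT).1).2
  have hcover : M ⊆ {T ∈ M | ¬ Disjoint T S} ∪ E ∪
      {T ∈ powersetCard (d + 1) Sᶜ \ E | extenders F S T ≠ extenders F S T₀} := fun T hT => by
    simp only [mem_union, mem_filter, mem_sdiff, mem_powersetCard, hT, hM T hT, true_and, and_true,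
      subset_compl_iff_disjoint_right]
    have hne : extenders F S T ≠ extenders F S T₀ := fun heq => by
      obtain ⟨v, hv, hvT⟩ := (mem_filter.1 hT).2
      rw [← heq] at hv
      exact hvT (mem_extenders.1 hv).2
    tauto
  have hmeet : #{T ∈ M | ¬ Disjoint T S} ≤ #S * Fintype.card α ^ d :=
    card_le_mul_pow_of_forall_not_disjoint (fun T hT => hM T (mem_filter.1 hT).1)
      (fun T _ => subset_univ T) fun T hT => (mem_filter.1 hT).2
  refine (card_le_card hcover).trans ((card_union_le _ _).trans (Nat.add_le_add_right ?_ _))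
  exact (card_union_le _ _).trans (Nat.add_le_add_right hmeet _)

theorem LoosePathFree.exists_card_missingLinks_le_add (hfree : LoosePathFree (2 * t + 2) F)
    (hF : (F : Set (Finset α)).Sized (d + 2)) (hd : 1 ≤ d) (ht : 1 ≤ t)
    (hS : 2 * (d + 1) ≤ #Sᶜ)
    (hE : 2 * (chooseConstant (d + 1) * (d + 1) ^ 2 *
      #(exceptionalLinks d t (pathBudget (d + 2) t) F S)) ≤ #Sᶜ ^ (d + 1)) :
    ∃ S₀ : Finset α, #S₀ = t ∧ #(missingLinks (d + 1) F S₀) ≤ #S * Fintype.card α ^ d +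
      (1 + chooseConstant (d + 1) * (d + 1) ^ 2) *
        #(exceptionalLinks d t (pathBudget (d + 2) t) F S) := by
  set E := exceptionalLinks d t (pathBudget (d + 2) t) F S with hEdef
  obtain ⟨e, rfl⟩ := Nat.exists_eq_add_of_le' hd
  have hEsized : (E : Set (Finset α)).Sized (e + 2) := fun T hT =>
    (mem_powersetCard.1 (mem_filter.1 hT).1).2
  obtain ⟨T₀, hT₀, hne⟩ := exists_card_filter_ne_le_of_inter_nonempty hEsized hS hE
    fun T hT U hU hTU => hfree.extenders_eq_of_inter_nonempty hF ht hT hU hTU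
  obtain ⟨hT₀, hT₀E⟩ := mem_sdiff.1 hT₀
  refine ⟨extenders F S T₀, ?_, ?_⟩
  · by_contra hcard
    exact hT₀E (mem_filter.2 ⟨hT₀, Or.inl hcard⟩)
  · refine (card_missingLinks_extenders_le (e + 1) F S T₀ E).trans ?_
    rw [one_add_mul, ← add_assoc]
    exact Nat.add_le_add_left hne _

/-- The factor by which exceptional links have to be outnumbered for
`LoosePathFree.exists_mul_card_missingLinks_le`. -/
def stabilityConstant (d K : ℕ) : ℕ :=
  2 ^ (d + 1) * (2 * (K + 1) * (1 + chooseConstant (d + 1) * (d + 1) ^ 2))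

lemma LoosePathFree.exists_mul_card_missingLinks_le {K : ℕ} (hfree : LoosePathFree (2 * t + 2) F)
    (hF : (F : Set (Finset α)).Sized (d + 2)) (hd : 1 ≤ d) (ht : 1 ≤ t)
    (hn : 4 * (d + 1) ≤ Fintype.card α) (hS : 2 * (K + 1) * #S ≤ Fintype.card α)
    (hE : stabilityConstant d K * #(exceptionalLinks d t (pathBudget (d + 2) t) F S) ≤
      Fintype.card α ^ (d + 1)) :
    ∃ S₀ : Finset α, #S₀ = t ∧ K * #(missingLinks (d + 1) F S₀) ≤ Fintype.card α ^ (d + 1) := by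
  have hSc : Fintype.card α ≤ 2 * #Sᶜ := by
    have h2S : 2 * #S ≤ 2 * (K + 1) * #S := Nat.mul_le_mul_right _ (by omega)
    rw [card_compl]
    omega
  set n := Fintype.card α
  set e := #(exceptionalLinks d t (pathBudget (d + 2) t) F S) with he
  set q := chooseConstant (d + 1) * (d + 1) ^ 2 with hq
  have hE' : 2 ^ (d + 1) * (2 * (K + 1) * (1 + q) * e) ≤ n ^ (d + 1) := by
    rw [← mul_assoc]
    exact hE
  obtain ⟨S₀, hS₀, hmissing⟩ := hfree.exists_card_missingLinks_le_add hF hd ht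
    (show 2 * (d + 1) ≤ #Sᶜ by omega) (by
      refine Nat.le_of_mul_le_mul_left (hE'.trans' ?_ |>.trans ?_) (Nat.two_pow_pos (d + 1))
      · rw [← he, ← hq]
        refine Nat.mul_le_mul_left _ ?_
        calc 2 * (q * e) = 2 * 1 * q * e := by ring
          _ ≤ 2 * (K + 1) * (1 + q) * e := by gcongr <;> omega
      · rw [← mul_pow]
        gcongr)
  refine ⟨S₀, hS₀, Nat.le_of_mul_le_mul_left ?_ two_pos⟩
  calc 2 * (K * #(missingLinks (d + 1) F S₀)) ≤ 2 * (K * (#S * n ^ d + (1 + q) * e)) := by gcongr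
    _ = 2 * K * #S * n ^ d + 1 * (2 * K * (1 + q) * e) := by ring
    _ ≤ 2 * (K + 1) * #S * n ^ d + 2 ^ (d + 1) * (2 * (K + 1) * (1 + q) * e) := by
      gcongr
      · omega
      · exact Nat.one_le_two_pow
      · omega
    _ ≤ n * n ^ d + n ^ (d + 1) := by gcongr
    _ = 2 * n ^ (d + 1) := by ring

theorem exists_forall_exists_card_missingLinks_le (d t K : ℕ) (hd : 1 ≤ d) (ht : 1 ≤ t) :
    ∃ n₀, ∀ (α : Type*) [Fintype α] [DecidableEq α], n₀ ≤ Fintype.card α →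
      ∀ F : Finset (Finset α), (F : Set (Finset α)).Sized (d + 2) → LoosePathFree (2 * t + 2) F →
      ∑ i ∈ Icc 1 t, (Fintype.card α - i).choose (d + 1) ≤ #F →
      ∃ S : Finset α, #S = t ∧ K * #(missingLinks (d + 1) F S) ≤ Fintype.card α ^ (d + 1) := by
  set s := pathBudget (d + 2) t
  set M := stabilityConstant d K
  set b := starConstant (d + 2) (2 * t + 2) ^ 4 * (2 * M) ^ 2 * (d + 2)
  refine ⟨2 * M * exceptionConstant b s t + 2 * (K + 1) * b + 4 * (d + 1) + t, ?_⟩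
  intro α _ _ hn F hF hfree hcard
  have hα : Nonempty α := Fintype.card_pos_iff.1 (by omega)
  obtain ⟨S, hSb : #S ≤ b, hdisj⟩ := hfree.exists_heavy_set (by omega) (by omega) hF (2 * M)
  have hS : 2 * (K + 1) * #S ≤ Fintype.card α := (Nat.mul_le_mul_left _ hSb).trans (by omega)
  refine hfree.exists_mul_card_missingLinks_le hF hd ht (by omega) hS
    (Nat.le_of_mul_le_mul_left ?_ two_pos)
  set n := Fintype.card α
  have hconst : 2 * M * exceptionConstant #S s t ≤ n := by
    have hmono : exceptionConstant #S s t ≤ exceptionConstant b s t := by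
      unfold exceptionConstant
      gcongr
      exact one_le_two
    exact (Nat.mul_le_mul_left _ hmono).trans (by omega)
  calc 2 * (M * #(exceptionalLinks d t s F S))
      ≤ 2 * (M * (#{e ∈ F | Disjoint e S} + exceptionConstant #S s t * n ^ d)) := by
        gcongr
        exact hfree.card_exceptionalLinks_le hF (by omega) hcard S
    _ = 2 * M * #{e ∈ F | Disjoint e S} + 2 * M * exceptionConstant #S s t * n ^ d := by ring
    _ ≤ n ^ (d + 1) + n * n ^ d := by gcongr
    _ = 2 * n ^ (d + 1) := by ring

end Stability

section Structure

variable {α : Type*} [DecidableEq α] {F G : Finset (Finset α)} {A B D S : Finset α} {d k r s t : ℕ}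

lemma card_le_pow_of_sdiff_eq (hF : (F : Set (Finset α)).Sized (r + 1)) (hD : D.Nonempty)
    (hsub : ∀ A ∈ F, ¬ A ⊆ D) (hsdiff : ∀ A ∈ F, ∀ B ∈ F, A \ D = B \ D) : #F ≤ #D ^ r := by
  obtain rfl | ⟨A₀, hA₀⟩ := F.eq_empty_or_nonempty
  · simp
  have hcard : ∀ A ∈ F, #(A ∩ D) + #(A₀ \ D) = r + 1 := fun A hA => by
    rw [← hsdiff A hA A₀ hA₀, card_inter_add_card_sdiff, hF hA]
  have hpos : 0 < #(A₀ \ D) := card_pos.2 (sdiff_nonempty.2 (hsub A₀ hA₀))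
  have hA₀card := hcard A₀ hA₀
  have hmaps : ∀ A ∈ F, A ∩ D ∈ powersetCard #(A₀ ∩ D) D := fun A hA => by
    have hAcard := hcard A hA
    exact mem_powersetCard.2 ⟨inter_subset_right, by omega⟩
  have hinj : Set.InjOn (fun A => A ∩ D) F := fun A hA B hB hAB => by
    rw [← sdiff_union_inter A D, ← sdiff_union_inter B D, hsdiff A hA B hB]
    exact congrArg _ hAB
  calc #F ≤ #(powersetCard #(A₀ ∩ D) D) := card_le_card_of_injOn _ hmaps hinj
    _ ≤ #D ^ #(A₀ ∩ D) := by
      rw [card_powersetCard]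
      exact Nat.choose_le_pow _ _
    _ ≤ #D ^ r := Nat.pow_le_pow_right (card_pos.2 hD) (by omega)

lemma LoosePathFree.sdiff_subset_of_inter_nonempty (hfree : LoosePathFree (2 * t + 2) F)
    (hF : (F : Set (Finset α)).Sized k) (ht : 1 ≤ t) (hS : #S = t)
    (hG : IsCommonLink (pathBudget k t) F S G)
    (hD : ∀ x ∉ S, x ∉ D → ∀ v ∈ S, IsRobustKernel (pathBudget k t) F {v, x})
    (hA : A ∈ F) (hB : B ∈ F) (hAS : Disjoint A S) (hBS : Disjoint B S)
    (hAB : (B ∩ A).Nonempty) : B \ A ⊆ D := by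
  intro b hb
  by_contra hbD
  exact hG.not_loosePathFree_of_robust_sdiff hF ht hS hA hB hAS hBS hAB hb
    (hD b (disjoint_left.1 hBS (mem_sdiff.1 hb).1) hbD) hfree

lemma LoosePathFree.sdiff_eq_sdiff (hfree : LoosePathFree (2 * t + 2) F)
    (hF : (F : Set (Finset α)).Sized k) (hk : 2 ≤ k) (ht : 1 ≤ t) (hS : #S = t)
    (hG : IsCommonLink (pathBudget k t) F S G)
    (hD : ∀ x ∉ S, x ∉ D → ∀ v ∈ S, IsRobustKernel (pathBudget k t) F {v, x})
    (hA : A ∈ F) (hB : B ∈ F) (hAS : Disjoint A S) (hBS : Disjoint B S)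
    (hAD : ¬ A ⊆ D) (hBD : ¬ B ⊆ D) : A \ D = B \ D := by
  have hAB : ¬ Disjoint A B := fun hdisj => by
    obtain ⟨a, ha, haD⟩ := not_subset.1 hAD
    obtain ⟨b, hb, hbD⟩ := not_subset.1 hBD
    exact hG.not_loosePathFree_of_disjoint_robust hF hk ht hS hA hB hAS hBS hdisj ha hb
      (hD a (disjoint_left.1 hAS ha) haD) (hD b (disjoint_left.1 hBS hb) hbD) hfree
  rw [not_disjoint_iff_nonempty_inter] at hAB
  have hsubAB := hfree.sdiff_subset_of_inter_nonempty hF ht hS hG hD hB hA hBS hAS hAB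
  rw [inter_comm] at hAB
  have hsubBA := hfree.sdiff_subset_of_inter_nonempty hF ht hS hG hD hA hB hAS hBS hAB
  ext x
  have hxA := @hsubAB x
  have hxB := @hsubBA x
  simp only [mem_sdiff] at hxA hxB ⊢
  tauto

lemma LoosePathFree.card_filter_disjoint_le_mul_pow [Finite α]
    (hfree : LoosePathFree (2 * t + 2) F) (hF : (F : Set (Finset α)).Sized (r + 1)) (hr : 2 ≤ r)
    (hD : D.Nonempty)
    (hsdiff : ∀ A ∈ F, Disjoint A S → ¬ A ⊆ D → ∀ B ∈ F, Disjoint B S → ¬ B ⊆ D → A \ D = B \ D) :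
    #{e ∈ F | Disjoint e S} ≤ (starConstant (r + 1) (2 * t + 2) ^ 2 + 1) * #D ^ r := by
  set outer := {e ∈ F | Disjoint e S}
  have hsub : outer ⊆ F := filter_subset _ _
  have hinside : #{e ∈ outer | e ⊆ D} ≤ starConstant (r + 1) (2 * t + 2) ^ 2 * #D ^ r :=
    (hfree.subset ((filter_subset _ _).trans hsub)).card_le hr (by omega)
      (hF.mono (coe_subset.2 ((filter_subset _ _).trans hsub))) fun e he => (mem_filter.1 he).2
  have houtside : #{e ∈ outer | ¬ e ⊆ D} ≤ #D ^ r := by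
    refine card_le_pow_of_sdiff_eq (hF.mono (coe_subset.2 ((filter_subset _ _).trans hsub))) hD
      (fun A hA => (mem_filter.1 hA).2) fun A hA B hB => ?_
    obtain ⟨hA, hAD⟩ := mem_filter.1 hA
    obtain ⟨hB, hBD⟩ := mem_filter.1 hB
    obtain ⟨hA, hAS⟩ := mem_filter.1 hA
    obtain ⟨hB, hBS⟩ := mem_filter.1 hB
    exact hsdiff A hA hAS hAD B hB hBS hBD
  rw [← card_filter_add_card_filter_not (s := outer) (· ⊆ D), add_one_mul]
  exact Nat.add_le_add hinside houtside

variable [Fintype α]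

/-- All `k`-sets of vertices meeting `S`. -/
def setsMeeting (k : ℕ) (S : Finset α) : Finset (Finset α) :=
  {A ∈ powersetCard k univ | (A ∩ S).Nonempty}

lemma mem_setsMeeting : A ∈ setsMeeting k S ↔ #A = k ∧ ¬ Disjoint A S := by
  rw [setsMeeting, mem_filter, mem_powersetCard_univ, not_disjoint_iff_nonempty_inter]

lemma card_setsMeeting (d : ℕ) (S : Finset α) :
    #(setsMeeting (d + 1) S) = ∑ i ∈ Icc 1 #S, (Fintype.card α - i).choose d := by
  have hcompl : {A ∈ powersetCard (d + 1) (univ : Finset α) | ¬ (A ∩ S).Nonempty} =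
      powersetCard (d + 1) Sᶜ := by
    ext A
    rw [mem_filter, mem_powersetCard_univ, mem_powersetCard, subset_compl_iff_disjoint_right,
      ← not_disjoint_iff_nonempty_inter, not_not, and_comm]
  have hsplit := card_filter_add_card_filter_not (s := powersetCard (d + 1) (univ : Finset α))
    fun A => (A ∩ S).Nonempty
  rw [hcompl, card_powersetCard, card_powersetCard, card_univ, card_compl,
    choose_succ_eq_choose_sub_add_sum d (card_le_univ S), add_comm] at hsplit
  exact Nat.add_left_cancel hsplit

lemma filter_disjoint_union_inter_setsMeeting (hF : (F : Set (Finset α)).Sized k) (S : Finset α) :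
    {e ∈ F | Disjoint e S} ∪ F ∩ setsMeeting k S = F := by
  ext A
  have hA := @hF A
  simp only [mem_union, mem_filter, mem_inter, mem_setsMeeting]
  rw [mem_coe] at hA
  tauto

lemma card_add_card_setsMeeting_sdiff_le (hF : (F : Set (Finset α)).Sized k) (S : Finset α) :
    #F + #(setsMeeting k S \ F) ≤ #{e ∈ F | Disjoint e S} + #(setsMeeting k S) := by
  have hle := card_union_le {e ∈ F | Disjoint e S} (F ∩ setsMeeting k S)
  rw [filter_disjoint_union_inter_setsMeeting hF S, inter_comm] at hle
  have hsplit := card_inter_add_card_sdiff (setsMeeting k S) F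
  omega

lemma card_missingLinks_le_card_setsMeeting_sdiff (r : ℕ) (F : Finset (Finset α)) (S : Finset α) :
    #(missingLinks r F S) ≤ #(setsMeeting (r + 1) S \ F) := by
  refine (card_le_card fun T hT => ?_).trans (card_image_le (f := fun A => A \ S))
  obtain ⟨hT, v, hv, hvT⟩ := mem_filter.1 hT
  obtain ⟨hTS, hTcard⟩ := mem_powersetCard.1 hT
  rw [subset_compl_iff_disjoint_right] at hTS
  refine mem_image.2 ⟨insert v T, mem_sdiff.2 ⟨mem_setsMeeting.2 ⟨?_, ?_⟩, hvT⟩, ?_⟩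
  · rw [card_insert_of_notMem (disjoint_right.1 hTS hv), hTcard]
  · exact not_disjoint_iff.2 ⟨v, mem_insert_self v T, hv⟩
  · rw [insert_sdiff_of_mem T hv, sdiff_eq_self_of_disjoint hTS]

/-- The vertices outside `S` lying in many missing links: at least half of the `(d + 1)`-sets
outside `S` that contain them are missing. -/
def weakVertices (d : ℕ) (F : Finset (Finset α)) (S : Finset α) : Finset α :=
  {x ∈ Sᶜ | (Fintype.card α - (#S + 1)).choose d ≤ 2 * #{T ∈ missingLinks (d + 1) F S | x ∈ T}}

lemma missingLinks_subset (r : ℕ) (F : Finset (Finset α)) (S : Finset α) :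
    missingLinks r F S ⊆ powersetCard r Sᶜ :=
  filter_subset _ _

lemma sized_missingLinks (r : ℕ) (F : Finset (Finset α)) (S : Finset α) :
    (missingLinks r F S : Set (Finset α)).Sized r := fun _ hT =>
  (mem_powersetCard.1 (missingLinks_subset r F S hT)).2

lemma insert_mem_of_notMem_missingLinks {T : Finset α} {v : α} (hT : T ∈ powersetCard r Sᶜ)
    (hmissing : T ∉ missingLinks r F S) (hv : v ∈ S) : insert v T ∈ F := by
  by_contra hvT
  exact hmissing (mem_filter.2 ⟨hT, v, hv, hvT⟩)

lemma card_weakVertices_mul_pow_le (F : Finset (Finset α))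
    (hn : 2 * (#S + 1 + d) ≤ Fintype.card α) :
    #(weakVertices d F S) * Fintype.card α ^ d ≤
      2 * chooseConstant (d + 1) * (d + 1) * #(missingLinks (d + 1) F S) := by
  set q := chooseConstant (d + 1)
  set D := weakVertices d F S
  set C := (Fintype.card α - (#S + 1)).choose d
  calc #D * Fintype.card α ^ d ≤ #D * (q * C) :=
        Nat.mul_le_mul_left _ (pow_le_chooseConstant_mul_choose d.le_succ hn)
    _ = q * (#D * C) := by ring
    _ ≤ q * (2 * ((d + 1) * #(missingLinks (d + 1) F S))) := by
        have hdeg : ∀ x ∈ D, C ≤ 2 * #{T ∈ missingLinks (d + 1) F S | x ∈ T} := fun x hx =>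
          (mem_filter.1 hx).2
        exact Nat.mul_le_mul_left _
          (card_mul_le_mul_card_of_forall_le_mul_degree (sized_missingLinks _ F S) hdeg)
    _ = 2 * q * (d + 1) * #(missingLinks (d + 1) F S) := by ring

lemma isCommonLink_powersetCard_sdiff_missingLinks
    (hn : 2 * (#S + (d + 1)) ≤ Fintype.card α)
    (hs : 2 * chooseConstant (d + 1) * s < Fintype.card α)
    (hmissing : 2 * chooseConstant (d + 1) * #(missingLinks (d + 1) F S) ≤
      Fintype.card α ^ (d + 1)) :
    IsCommonLink s F S (powersetCard (d + 1) Sᶜ \ missingLinks (d + 1) F S) := by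
  set q := chooseConstant (d + 1)
  refine .of_lt_card (fun T hT => (mem_powersetCard.1 (mem_sdiff.1 hT).1).2) ?_ fun v hv T hT =>
    insert_mem_of_notMem_missingLinks (mem_sdiff.1 hT).1 (mem_sdiff.1 hT).2 hv
  have hsplit := card_sdiff_add_card_eq_card (missingLinks_subset (d + 1) F S)
  rw [card_powersetCard, card_compl] at hsplit
  have hpow := pow_le_chooseConstant_mul_choose (le_refl (d + 1)) hn
  rw [← hsplit] at hpow
  set n := Fintype.card α
  by_contra! hle
  refine (lt_irrefl (2 * n ^ (d + 1))) ?_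
  calc 2 * n ^ (d + 1)
      ≤ 2 * (q * (#(powersetCard (d + 1) Sᶜ \ missingLinks (d + 1) F S) +
          #(missingLinks (d + 1) F S))) := by gcongr
    _ = 2 * q * #(powersetCard (d + 1) Sᶜ \ missingLinks (d + 1) F S) +
          2 * q * #(missingLinks (d + 1) F S) := by ring
    _ ≤ 2 * q * (s * n ^ d) + n ^ (d + 1) := by gcongr
    _ = 2 * q * s * n ^ d + n ^ (d + 1) := by ring
    _ < n * n ^ d + n ^ (d + 1) := by
      gcongr
      exact Nat.pow_pos (by omega)
    _ = 2 * n ^ (d + 1) := by ring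

lemma card_filter_mem_sdiff_missingLinks_le {W : Finset α} {v x : α} (hv : v ∈ S)
    (hmeet : ∀ A ∈ F, {v, x} ⊆ A → ¬ Disjoint (A \ {v, x}) W) :
    #{T ∈ powersetCard (r + 2) Sᶜ \ missingLinks (r + 2) F S | x ∈ T} ≤
      #W * Fintype.card α ^ r := by
  refine card_le_mul_pow_of_forall_not_disjoint_erase (v := x)
    (fun T hT => (mem_powersetCard.1 (mem_sdiff.1 (mem_filter.1 hT).1).1).2)
    (fun T hT => (mem_filter.1 hT).2) fun T hT => ?_
  obtain ⟨hT, hxT⟩ := mem_filter.1 hT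
  obtain ⟨hT, hTmissing⟩ := mem_sdiff.1 hT
  have hvT : v ∉ T := fun hvT => mem_compl.1 ((mem_powersetCard.1 hT).1 hvT) hv
  have hsdiff : insert v T \ {v, x} = T.erase x := by
    ext y
    simp only [mem_sdiff, mem_insert, mem_singleton, mem_erase]
    grind
  rw [← hsdiff]
  exact hmeet _ (insert_mem_of_notMem_missingLinks hT hTmissing hv)
    (insert_subset_insert v (singleton_subset_iff.2 hxT))

lemma isRobustKernel_pair_of_notMem_weakVertices {v x : α} (hd : 1 ≤ d)
    (hn : 2 * (#S + 1 + d) ≤ Fintype.card α)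
    (hs : 2 * chooseConstant (d + 1) * s < Fintype.card α) (hx : x ∉ S)
    (hxD : x ∉ weakVertices d F S) (hv : v ∈ S) : IsRobustKernel s F {v, x} := by
  intro W hW
  by_contra! hmeet
  obtain ⟨e, rfl⟩ := Nat.exists_eq_add_of_le' hd
  set present := {T ∈ powersetCard (e + 2) Sᶜ \ missingLinks (e + 2) F S | x ∈ T}
  have hpresent : #present ≤ s * Fintype.card α ^ e :=
    (card_filter_mem_sdiff_missingLinks_le hv hmeet).trans (Nat.mul_le_mul_right _ hW)
  have hstar : #{T ∈ powersetCard (e + 2) Sᶜ | x ∈ T} =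
      (Fintype.card α - (#S + 1)).choose (e + 1) := by
    have hcount := card_filter_subset_powersetCard (singleton_subset_iff.2 (mem_compl.2 hx)) (e + 1)
    simpa only [singleton_subset_iff, card_singleton, card_compl, Nat.sub_sub, add_comm 1]
      using hcount
  have hcover : {T ∈ powersetCard (e + 2) Sᶜ | x ∈ T} ⊆
      present ∪ {T ∈ missingLinks (e + 2) F S | x ∈ T} := fun T hT => by
    simp only [present, mem_union, mem_filter, mem_sdiff] at hT ⊢
    tauto
  have hcard := (card_le_card hcover).trans (card_union_le _ _)
  have hweak : 2 * #{T ∈ missingLinks (e + 2) F S | x ∈ T} <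
      (Fintype.card α - (#S + 1)).choose (e + 1) := by
    by_contra! hle
    exact hxD (mem_filter.2 ⟨mem_compl.2 hx, hle⟩)
  set n := Fintype.card α
  set q := chooseConstant (e + 2)
  refine hs.not_ge (Nat.le_of_mul_le_mul_right (c := n ^ e) ?_ (Nat.pow_pos (by omega)))
  calc n * n ^ e = n ^ (e + 1) := (pow_succ' n e).symm
    _ ≤ q * (n - (#S + 1)).choose (e + 1) :=
      pow_le_chooseConstant_mul_choose (e + 1).le_succ hn
    _ ≤ q * (2 * (s * n ^ e)) := Nat.mul_le_mul_left _ (by omega)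
    _ = 2 * q * s * n ^ e := by ring

lemma LoosePathFree.eq_empty_of_card_missingLinks_lt (hfree : LoosePathFree (2 * t + 2) F)
    (hF : (F : Set (Finset α)).Sized (d + 2)) (hd : 1 ≤ d) {M : ℕ}
    (hsdiff : ∀ A ∈ F, Disjoint A S → ¬ A ⊆ D → ∀ B ∈ F, Disjoint B S → ¬ B ⊆ D → A \ D = B \ D)
    (hDle : #D * Fintype.card α ^ d ≤ M * #(missingLinks (d + 1) F S))
    (hDsmall : M * (starConstant (d + 2) (2 * t + 2) ^ 2 + 1) * #D ≤ Fintype.card α)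
    (hlt : #(missingLinks (d + 1) F S) < #{e ∈ F | Disjoint e S}) : D = ∅ := by
  by_contra hne
  have hDne : D.Nonempty := nonempty_iff_ne_empty.2 hne
  set n := Fintype.card α
  set L := M * (starConstant (d + 2) (2 * t + 2) ^ 2 + 1)
  have hM : 0 < M := by
    have hn : 0 < n := Fintype.card_pos_iff.2 hDne.to_type
    have hpos : 0 < #D * n ^ d := Nat.mul_pos hDne.card_pos (Nat.pow_pos hn)
    exact (CanonicallyOrderedAdd.mul_pos.1 (hpos.trans_le hDle)).1
  refine hlt.not_ge (Nat.le_of_mul_le_mul_left ?_ hM)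
  calc M * #{e ∈ F | Disjoint e S}
      ≤ M * ((starConstant (d + 2) (2 * t + 2) ^ 2 + 1) * #D ^ (d + 1)) :=
        Nat.mul_le_mul_left _ (hfree.card_filter_disjoint_le_mul_pow hF (by omega) hDne hsdiff)
    _ = #D * (L * #D ^ d) := by ring
    _ ≤ #D * (L ^ d * #D ^ d) := by
        gcongr
        exact Nat.le_self_pow (by omega) L
    _ = #D * (L * #D) ^ d := by rw [mul_pow L]
    _ ≤ #D * n ^ d := by gcongr
    _ ≤ M * #(missingLinks (d + 1) F S) := hDle

lemma eq_insert_setsMeeting (hF : (F : Set (Finset α)).Sized (d + 1))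
    (houter : ∀ A ∈ F, Disjoint A S → ∀ B ∈ F, Disjoint B S → A = B)
    (hcard : #(setsMeeting (d + 1) S) + 1 ≤ #F) :
    ∃ E : Finset α, #E = d + 1 ∧ Disjoint E S ∧ F = insert E (setsMeeting (d + 1) S) := by
  have hle := card_add_card_setsMeeting_sdiff_le hF S
  have hone : #{e ∈ F | Disjoint e S} ≤ 1 := card_le_one.2 fun A hA B hB =>
    houter A (mem_filter.1 hA).1 (mem_filter.1 hA).2 B (mem_filter.1 hB).1 (mem_filter.1 hB).2
  obtain ⟨E, hE⟩ := card_eq_one.1 (show #{e ∈ F | Disjoint e S} = 1 by omega)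
  obtain ⟨hEF, hES⟩ := mem_filter.1 (hE ▸ mem_singleton_self E)
  have hsub : setsMeeting (d + 1) S ⊆ F := by
    rw [← sdiff_eq_empty_iff_subset, ← card_eq_zero]
    omega
  refine ⟨E, hF hEF, hES, ?_⟩
  rw [← filter_disjoint_union_inter_setsMeeting hF S, hE, inter_eq_right.2 hsub, insert_eq]

lemma LoosePathFree.sdiff_weakVertices_eq (hfree : LoosePathFree (2 * t + 2) F)
    (hF : (F : Set (Finset α)).Sized (d + 2)) (hd : 1 ≤ d) (ht : 1 ≤ t) (hS : #S = t)
    (hn : 2 * (t + (d + 1)) ≤ Fintype.card α)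
    (hbudget : 2 * chooseConstant (d + 1) * pathBudget (d + 2) t < Fintype.card α)
    (hmissing : 2 * chooseConstant (d + 1) * #(missingLinks (d + 1) F S) ≤
      Fintype.card α ^ (d + 1))
    (hA : A ∈ F) (hAS : Disjoint A S) (hAD : ¬ A ⊆ weakVertices d F S)
    (hB : B ∈ F) (hBS : Disjoint B S) (hBD : ¬ B ⊆ weakVertices d F S) :
    A \ weakVertices d F S = B \ weakVertices d F S :=
  hfree.sdiff_eq_sdiff hF (by omega) ht hS
    (isCommonLink_powersetCard_sdiff_missingLinks (by omega) hbudget hmissing)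
    (fun _ hx hxD _ hv =>
      isRobustKernel_pair_of_notMem_weakVertices hd (by omega) hbudget hx hxD hv)
    hA hB hAS hBS hAD hBD

lemma mul_card_weakVertices_le {L : ℕ} (hn : 2 * (#S + 1 + d) ≤ Fintype.card α)
    (hmissing : L * (2 * chooseConstant (d + 1) * (d + 1)) * #(missingLinks (d + 1) F S) ≤
      Fintype.card α ^ (d + 1)) :
    L * #(weakVertices d F S) ≤ Fintype.card α := by
  refine Nat.le_of_mul_le_mul_right ?_ (Nat.pow_pos (n := d) (show 0 < Fintype.card α by omega))
  rw [← pow_succ', mul_assoc]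
  refine (Nat.mul_le_mul_left L (card_weakVertices_mul_pow_le F hn)).trans ?_
  rwa [← mul_assoc]

theorem exists_forall_eq_insert_setsMeeting (d t : ℕ) (hd : 1 ≤ d) (ht : 1 ≤ t) :
    ∃ n₀, ∀ (α : Type*) [Fintype α] [DecidableEq α], n₀ ≤ Fintype.card α →
      ∀ F : Finset (Finset α), (F : Set (Finset α)).Sized (d + 2) → LoosePathFree (2 * t + 2) F →
      ∑ i ∈ Icc 1 t, (Fintype.card α - i).choose (d + 1) + 1 ≤ #F →
      ∃ S E : Finset α,
        #S = t ∧ #E = d + 2 ∧ Disjoint E S ∧ F = insert E (setsMeeting (d + 2) S) := by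
  let q := chooseConstant (d + 1)
  let M := 2 * q * (d + 1)
  let L := M * (starConstant (d + 2) (2 * t + 2) ^ 2 + 1)
  obtain ⟨n₁, hstable⟩ := exists_forall_exists_card_missingLinks_le d t (L * M + 2 * q) hd ht
  refine ⟨n₁ + 2 * (t + (d + 1)) + 2 * q * pathBudget (d + 2) t + 1, ?_⟩
  intro α _ _ hn F hF hfree hcard
  obtain ⟨S, hS, hmissing⟩ := hstable α (by omega) F hF hfree (by omega)
  rw [add_mul] at hmissing
  replace hcard : #(setsMeeting (d + 2) S) + 1 ≤ #F := by rwa [card_setsMeeting, hS]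
  have hsdiff : ∀ A ∈ F, Disjoint A S → ¬ A ⊆ weakVertices d F S → ∀ B ∈ F, Disjoint B S →
      ¬ B ⊆ weakVertices d F S → A \ weakVertices d F S = B \ weakVertices d F S :=
    fun A hA hAS hAD B hB hBS hBD => hfree.sdiff_weakVertices_eq hF hd ht hS (by omega)
      (show 2 * q * _ < _ by omega) (show 2 * q * _ ≤ _ by omega) hA hAS hAD hB hBS hBD
  have hlt : #(missingLinks (d + 1) F S) < #{e ∈ F | Disjoint e S} := by
    have hcount := card_add_card_setsMeeting_sdiff_le hF S
    have hle : #(missingLinks (d + 1) F S) ≤ #(setsMeeting (d + 2) S \ F) :=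
      card_missingLinks_le_card_setsMeeting_sdiff (d + 1) F S
    omega
  have hempty : weakVertices d F S = ∅ := hfree.eq_empty_of_card_missingLinks_lt hF hd hsdiff
    (card_weakVertices_mul_pow_le F (by omega))
    (mul_card_weakVertices_le (L := L) (by omega) (le_of_add_le_left hmissing)) hlt
  simp only [hempty, subset_empty, sdiff_empty] at hsdiff
  have hne : ∀ A ∈ F, A ≠ ∅ := fun A hA =>
    nonempty_iff_ne_empty.1 (card_pos.1 (hF hA ▸ Nat.succ_pos _))
  obtain ⟨E, hE⟩ := eq_insert_setsMeeting hF
    (fun A hA hAS B hB hBS => hsdiff A hA hAS (hne A hA) B hB hBS (hne B hB)) hcard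
  exact ⟨S, E, hS, hE⟩

end Structure

section Extremal

lemma card_filter_mem_le_two {α : Type*} [DecidableEq α] {ℓ : ℕ} {P : Fin ℓ → Finset α}
    (hP : ∀ i j, i < j → (P i ∩ P j).Nonempty → (i : ℕ) + 1 = j) (v : α) :
    #{i | v ∈ P i} ≤ 2 := by
  by_contra! hlt
  obtain ⟨a, ha, b, hb, c, hc, hab, hac, hbc⟩ := two_lt_card.1 hlt
  have hconsecutive : ∀ i j, v ∈ P i → v ∈ P j → i ≠ j → (i : ℕ) + 1 = j ∨ (j : ℕ) + 1 = i := by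
    intro i j hi hj hij
    obtain hlt | hgt := lt_or_gt_of_ne hij
    · exact .inl (hP i j hlt ⟨v, mem_inter.2 ⟨hi, hj⟩⟩)
    · exact .inr (hP j i hgt ⟨v, mem_inter.2 ⟨hj, hi⟩⟩)
  simp only [mem_filter_univ] at ha hb hc
  have := hconsecutive a b ha hb hab
  have := hconsecutive a c ha hc hac
  have := hconsecutive b c hb hc hbc
  omega

lemma not_containsLoosePath_insert_setsMeeting {n : ℕ} (k : ℕ) (S E : Finset (Fin n)) :
    ¬ ContainsLoosePath k (2 * #S + 2) (insert E (setsMeeting k S)) := by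
  rintro ⟨P, hinj, hmem, -, hadj⟩
  have hcover : (univ : Finset (Fin (2 * #S + 2))) ⊆
      ({i | P i = E} : Finset _) ∪ S.biUnion fun v => {i | v ∈ P i} := fun i _ => by
    obtain hi | hi := mem_insert.1 (hmem i)
    · exact mem_union_left _ (mem_filter_univ i |>.2 hi)
    · obtain ⟨v, hv, hvS⟩ := not_disjoint_iff.1 (mem_setsMeeting.1 hi).2
      exact mem_union_right _ (mem_biUnion.2 ⟨v, hvS, mem_filter_univ i |>.2 hv⟩)
  have hE : #{i | P i = E} ≤ 1 := card_le_one.2 fun i hi j hj =>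
    hinj ((mem_filter_univ i |>.1 hi).trans (mem_filter_univ j |>.1 hj).symm)
  have hS : #(S.biUnion fun v => {i | v ∈ P i}) ≤ #S * 2 :=
    card_biUnion_le_card_mul _ _ _ fun v _ =>
      card_filter_mem_le_two (fun i j hij => (hadj i j hij).1) v
  have hcard := (card_le_card hcover).trans (card_union_le _ _)
  rw [card_univ, Fintype.card_fin] at hcard
  omega

lemma card_insert_setsMeeting {n : ℕ} {S E : Finset (Fin n)} (d : ℕ) (hES : Disjoint E S) :
    #(insert E (setsMeeting (d + 1) S)) = ∑ i ∈ Icc 1 #S, (n - i).choose d + 1 := by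
  rw [card_insert_of_notMem fun hE => (mem_setsMeeting.1 hE).2 hES, card_setsMeeting,
    Fintype.card_fin]

lemma exists_sized_not_containsLoosePath {n t d : ℕ} (hn : t + (d + 1) ≤ n) :
    ∃ F : Finset (Finset (Fin n)), (F : Set (Finset (Fin n))).Sized (d + 1) ∧
      ¬ ContainsLoosePath (d + 1) (2 * t + 2) F ∧
      #F = ∑ i ∈ Icc 1 t, (n - i).choose d + 1 := by
  obtain ⟨S, -, rfl⟩ := exists_subset_card_eq (s := (univ : Finset (Fin n))) (n := t) (by
    rw [card_univ, Fintype.card_fin]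
    omega)
  obtain ⟨E, hES, hE⟩ := exists_subset_card_eq (s := Sᶜ) (n := d + 1) (by
    rw [card_compl, Fintype.card_fin]
    omega)
  refine ⟨insert E (setsMeeting (d + 1) S), fun A hA => ?_,
    not_containsLoosePath_insert_setsMeeting (d + 1) S E,
    card_insert_setsMeeting d (subset_compl_iff_disjoint_right.1 hES)⟩
  obtain rfl | hA := mem_insert.1 (mem_coe.1 hA)
  · exact hE
  · exact (mem_setsMeeting.1 hA).1

end Extremal

/-- For k ≥ 3, t ≥ 1 and all sufficiently large n, the Turán number of the k-uniform loose
path of length 2t+2 is C(n-1,k-1)+⋯+C(n-t,k-1)+1, and the unique extremal families consist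
of all k-subsets of [n] meeting a fixed t-set S plus one additional k-set disjoint from S. -/
theorem turan_loose_path_even (k t : ℕ) (hk : 3 ≤ k) (ht : 1 ≤ t) :
    ∃ n₀ : ℕ, ∀ n : ℕ, n₀ ≤ n →
      IsGreatest {m : ℕ | ∃ F : Finset (Finset (Fin n)),
          (∀ A ∈ F, A.card = k) ∧ ¬ ContainsLoosePath k (2 * t + 2) F ∧ F.card = m}
        ((∑ i ∈ Finset.Icc 1 t, (n - i).choose (k - 1)) + 1) ∧
      ∀ F : Finset (Finset (Fin n)),
        (∀ A ∈ F, A.card = k) → ¬ ContainsLoosePath k (2 * t + 2) F →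
        (F.card = (∑ i ∈ Finset.Icc 1 t, (n - i).choose (k - 1)) + 1 ↔
          ∃ (S : Finset (Fin n)) (E : Finset (Fin n)), S.card = t ∧ E.card = k ∧ E ∩ S = ∅ ∧
            F = insert E
              ((Finset.powersetCard k Finset.univ).filter (fun A => (A ∩ S).Nonempty))) := by
  obtain ⟨d, rfl⟩ := Nat.exists_eq_add_of_le' (show 2 ≤ k by omega)
  obtain ⟨n₁, hstructure⟩ := exists_forall_eq_insert_setsMeeting d t (by omega) ht
  refine ⟨n₁ + (t + (d + 2)), fun n hn => ?_⟩
  have hextremal : ∀ F : Finset (Finset (Fin n)), (∀ A ∈ F, #A = d + 2) →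
      ¬ ContainsLoosePath (d + 2) (2 * t + 2) F →
      ∑ i ∈ Icc 1 t, (n - i).choose (d + 1) + 1 ≤ #F → ∃ S E : Finset (Fin n),
        #S = t ∧ #E = d + 2 ∧ E ∩ S = ∅ ∧ F = insert E (setsMeeting (d + 2) S) := by
    simp only [← disjoint_iff_inter_eq_empty]
    intro F hF hfree hcard
    exact hstructure (Fin n) (by rw [Fintype.card_fin]; omega) F hF
      (loosePathFree_of_not_containsLoosePath hF hfree) (by rwa [Fintype.card_fin])
  have hcard : ∀ {S E : Finset (Fin n)}, #S = t → E ∩ S = ∅ →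
      #(insert E (setsMeeting (d + 2) S)) = ∑ i ∈ Icc 1 t, (n - i).choose (d + 1) + 1 := by
    rintro S E rfl hES
    exact card_insert_setsMeeting (d + 1) (disjoint_iff_inter_eq_empty.2 hES)
  refine ⟨⟨exists_sized_not_containsLoosePath (by omega), ?_⟩,
    fun F hF hfree => ⟨fun heq => hextremal F hF hfree heq.ge, ?_⟩⟩
  · rintro m ⟨F, hF, hfree, rfl⟩
    by_contra! hlt
    obtain ⟨S, E, hS, -, hES, rfl⟩ := hextremal F hF hfree hlt.le
    exact hlt.ne' (hcard hS hES)
  · rintro ⟨S, E, hS, -, hES, rfl⟩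
    exact hcard hS hES
end

section
/- Let k, s be positive integers and let F* ⊆ binom([n],k) be a (k,s)-homogeneous family on n vertices with intersection pattern J. If the rank r(J) equals p, then |F*| ≤ C(n,p). -/
open Finset

/-- The finsets in `S` form an s-star (Δ-system) in `G` with kernel `A`:
`S` consists of `s` members of `G` whose pairwise intersections all equal `A`. -/
def IsStarWithKernel {α : Type*} [DecidableEq α] (G : Finset (Finset α)) (s : ℕ)
    (A : Finset α) (S : Finset (Finset α)) : Prop :=
  S ⊆ G ∧ S.card = s ∧ ∀ E₁ ∈ S, ∀ E₂ ∈ S, E₁ ≠ E₂ → E₁ ∩ E₂ = A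

/-- The pattern Π(S) of a set S relative to the partition (X_1, …, X_k):
the set of indices i with S ∩ X_i ≠ ∅. -/
def pattern {k n : ℕ} (X : Fin k → Finset (Fin n)) (S : Finset (Fin n)) : Finset (Fin k) :=
  Finset.univ.filter fun i => (S ∩ X i).Nonempty

/-- `G` is a (k,s)-homogeneous family with k-partition `X` and intersection pattern `J`:
`X` partitions the vertex set, every member of `G` is a k-set meeting each part in exactly
one vertex, `J` is an intersection-closed family of proper subsets of [k], every member `F`
of `G` has Π(I(F,G)) = J, and every intersection `F ∩ F'` of distinct members is the kernel
of an s-star in `G` containing `F`. -/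
def IsHomogeneous (k s : ℕ) {n : ℕ} (G : Finset (Finset (Fin n)))
    (X : Fin k → Finset (Fin n)) (J : Finset (Finset (Fin k))) : Prop :=
  (∀ v : Fin n, ∃! i : Fin k, v ∈ X i) ∧
  (∀ F ∈ G, F.card = k ∧ ∀ i : Fin k, (F ∩ X i).card = 1) ∧
  (∀ B ∈ J, B ≠ Finset.univ) ∧
  (∀ A ∈ J, ∀ B ∈ J, A ∩ B ∈ J) ∧
  (∀ F ∈ G, (G.erase F).image (fun F' => pattern X (F ∩ F')) = J) ∧
  (∀ F ∈ G, ∀ F' ∈ G, F' ≠ F → ∃ S : Finset (Finset (Fin n)),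
      IsStarWithKernel G s (F ∩ F') S ∧ F ∈ S)

/-- The rank of a family `L` of subsets of [k]: the minimum cardinality of a set
`D ⊆ [k]` contained in no member of `L`. -/
noncomputable def patRank (k : ℕ) (L : Finset (Finset (Fin k))) : ℕ :=
  sInf {p : ℕ | ∃ D : Finset (Fin k), D.card = p ∧ ∀ B ∈ L, ¬ D ⊆ B}

/-- A family `L` of proper subsets of [k] (of rank k-1) is of type 1 if there is an
`x ∈ [k]` with `[k] ∖ {x} ∉ L` but `[k] ∖ {y} ∈ L` for every `y ≠ x`. -/
def IsType1 {k : ℕ} (L : Finset (Finset (Fin k))) : Prop :=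
  ∃ x : Fin k, Finset.univ.erase x ∉ L ∧ ∀ y : Fin k, y ≠ x → Finset.univ.erase y ∈ L

/-!
Choose a set `D` of `p` parts contained in no member of `J`, and send `F` to its trace on the parts
indexed by `D`. The trace is a `p`-set because `F` meets each part once. Two distinct members with
the same trace would share a vertex in every part of `D`, so that the pattern of their intersection,
a member of `J`, would contain `D`.
-/

section Trace

variable {ι α : Type*} [DecidableEq α] {X : ι → Finset α} {D : Finset ι}

theorem card_inter_biUnion_eq_card {F : Finset α} (hX : (D : Set ι).PairwiseDisjoint X)
    (hF : ∀ i ∈ D, #(F ∩ X i) = 1) : #(F ∩ D.biUnion X) = #D := by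
  have hdisj : (D : Set ι).PairwiseDisjoint fun i => F ∩ X i :=
    hX.mono fun _ => inter_subset_right
  rw [inter_biUnion, card_biUnion hdisj, sum_congr rfl hF, card_eq_sum_ones]

theorem inter_inter_nonempty_of_inter_biUnion_eq {F F' : Finset α} {i : ι}
    (htrace : F ∩ D.biUnion X = F' ∩ D.biUnion X) (hi : i ∈ D) (hF : (F ∩ X i).Nonempty) :
    (F ∩ F' ∩ X i).Nonempty := by
  obtain ⟨v, hv⟩ := hF
  obtain ⟨hvF, hvX⟩ := mem_inter.mp hv
  have hvF' : v ∈ F' ∩ D.biUnion X :=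
    htrace ▸ mem_inter.mpr ⟨hvF, mem_biUnion.mpr ⟨i, hi, hvX⟩⟩
  exact ⟨v, mem_inter.mpr ⟨mem_inter.mpr ⟨hvF, (mem_inter.mp hvF').1⟩, hvX⟩⟩

theorem card_le_choose_of_pairwise_inter_inter_eq_empty [Fintype α] {G : Finset (Finset α)}
    (hX : (D : Set ι).PairwiseDisjoint X) (hG : ∀ F ∈ G, ∀ i ∈ D, #(F ∩ X i) = 1)
    (hsep : (G : Set (Finset α)).Pairwise fun F F' => ∃ i ∈ D, F ∩ F' ∩ X i = ∅) :
    #G ≤ (Fintype.card α).choose #D := by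
  have hmaps : Set.MapsTo (fun F => F ∩ D.biUnion X) G (powersetCard #D (univ : Finset α)) :=
    fun F hF => mem_powersetCard_univ.mpr (card_inter_biUnion_eq_card hX (hG F hF))
  have hinj : Set.InjOn (fun F => F ∩ D.biUnion X) (G : Set (Finset α)) := by
    intro F hF F' hF' htrace
    by_contra hne
    obtain ⟨i, hi, hempty⟩ := hsep hF hF' hne
    have hmeets : (F ∩ X i).Nonempty := card_pos.mp (by simp [hG F hF i hi])
    exact (inter_inter_nonempty_of_inter_biUnion_eq htrace hi hmeets).ne_empty hempty
  calc #G ≤ #(powersetCard #D (univ : Finset α)) := card_le_card_of_injOn _ hmaps hinj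
    _ = (Fintype.card α).choose #D := by rw [card_powersetCard, card_univ]

end Trace

section Rank

variable {k n : ℕ} {X : Fin k → Finset (Fin n)} {J : Finset (Finset (Fin k))}

theorem mem_pattern {S : Finset (Fin n)} {i : Fin k} :
    i ∈ pattern X S ↔ (S ∩ X i).Nonempty := by
  simp [pattern]

theorem exists_card_eq_patRank (hJ : univ ∉ J) :
    ∃ D : Finset (Fin k), #D = patRank k J ∧ ∀ B ∈ J, ¬ D ⊆ B :=
  Nat.sInf_mem (s := {p | ∃ D : Finset (Fin k), #D = p ∧ ∀ B ∈ J, ¬ D ⊆ B})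
    ⟨_, univ, rfl, fun _ hB hsub => hJ (univ_subset_iff.mp hsub ▸ hB)⟩

theorem homogeneous_rank_bound_general {G : Finset (Finset (Fin n))}
    (hX : Pairwise (Function.onFun Disjoint X)) (hG : ∀ F ∈ G, ∀ i, #(F ∩ X i) = 1)
    (hJ : univ ∉ J)
    (hpattern : (G : Set (Finset (Fin n))).Pairwise fun F F' => pattern X (F ∩ F') ∈ J) :
    #G ≤ n.choose (patRank k J) := by
  obtain ⟨D, hcard, hD⟩ := exists_card_eq_patRank hJ
  have hsep : (G : Set (Finset (Fin n))).Pairwise fun F F' => ∃ i ∈ D, F ∩ F' ∩ X i = ∅ := by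
    intro F hF F' hF' hne
    obtain ⟨i, hi, hnotMem⟩ := not_subset.mp (hD _ (hpattern hF hF' hne))
    exact ⟨i, hi, not_nonempty_iff_eq_empty.mp (mt mem_pattern.mpr hnotMem)⟩
  have hbound := card_le_choose_of_pairwise_inter_inter_eq_empty (hX.set_pairwise _)
    (fun F hF i _ => hG F hF i) hsep
  rwa [Fintype.card_fin, hcard] at hbound

end Rank

namespace IsHomogeneous

variable {k s n : ℕ} {G : Finset (Finset (Fin n))} {X : Fin k → Finset (Fin n)}
  {J : Finset (Finset (Fin k))}

theorem pairwise_disjoint (hG : IsHomogeneous k s G X J) :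
    Pairwise (Function.onFun Disjoint X) :=
  fun _ _ hij => disjoint_left.mpr fun v hi hj => hij ((hG.1 v).unique hi hj)

theorem card_inter_part (hG : IsHomogeneous k s G X J) : ∀ F ∈ G, ∀ i, #(F ∩ X i) = 1 :=
  fun F hF => (hG.2.1 F hF).2

theorem univ_notMem (hG : IsHomogeneous k s G X J) : univ ∉ J :=
  fun huniv => hG.2.2.1 univ huniv rfl

theorem pairwise_pattern_inter_mem (hG : IsHomogeneous k s G X J) :
    (G : Set (Finset (Fin n))).Pairwise fun F F' => pattern X (F ∩ F') ∈ J := by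
  obtain ⟨-, -, -, -, hpattern, -⟩ := hG
  intro F hF F' hF' hne
  rw [← hpattern F hF]
  exact mem_image_of_mem (fun F' => pattern X (F ∩ F')) (mem_erase.mpr ⟨hne.symm, hF'⟩)

end IsHomogeneous

/-- Proposition 3.4 (the rank bound): a (k,s)-homogeneous family on n vertices whose
intersection pattern has rank p has at most C(n,p) members. -/
theorem homogeneous_rank_bound (k s p n : ℕ) (hk : 1 ≤ k) (hs : 1 ≤ s)
    (G : Finset (Finset (Fin n))) (X : Fin k → Finset (Fin n)) (J : Finset (Finset (Fin k)))
    (hG : IsHomogeneous k s G X J)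
    (hrank : patRank k J = p) :
    G.card ≤ n.choose p := by
  rw [← hrank]
  exact homogeneous_rank_bound_general hG.pairwise_disjoint hG.card_inter_part hG.univ_notMem
    hG.pairwise_pattern_inter_mem
end

section
/- Let k ≥ 3 be an integer and let L be a family of proper subsets of [k] that is closed under intersection. Then: (1) if L has rank k, then L consists of all proper subsets of [k]; (2) if L has rank k−1 and is of type 1, then there exists i ∈ [k] such that L contains every proper subset of [k] that contains i; (3) if k ≥ 4 and L has rank k−1 and is of type 2, then L contains at least two singletons. -/
open Finset

/-!
An intersection-closed family is governed by the complements of points it contains. Call `x`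
omitted if `{x}ᶜ ∉ L`. A proper subset containing all omitted points is the intersection of the
sets `{y}ᶜ` over the points `y` outside it, hence lies in `L`. Rank `k` means that no point is
omitted, and type 1 that exactly one is, which gives the first two claims.

Rank `k - 1` forces `{x, y}ᶜ ∈ L` for any two omitted points `x` and `y`. So `{u} ∈ L` unless
exactly one point other than `u` is omitted: every omitted `y ≠ u` has an omitted partner `z ≠ u`,
and `{y, z}ᶜ` separates `u` from `y`. If the number of omitted points is neither 1 nor 2 this
applies to every `u`; if it is 2 it applies to the `k - 2` points that are not omitted.
-/

section FiniteGroundSet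

variable {α : Type*} [Fintype α] [DecidableEq α] {L : Finset (Finset α)} {B : Finset α} {u x y : α}

/-- The points `x` of the ground set whose complement `{x}ᶜ` is missing from the family `L`. They
measure how far an intersection-closed `L` is from containing every proper subset; type 1 means that
there is exactly one of them. -/
def omittedPoints (L : Finset (Finset α)) : Finset α := {x | {x}ᶜ ∉ L}

theorem mem_omittedPoints : x ∈ omittedPoints L ↔ {x}ᶜ ∉ L := by
  simp [omittedPoints]

theorem mem_of_forall_notMem_exists_superset (hL : InfClosed (L : Set (Finset α)))
    (hB : B ≠ univ) (hsep : ∀ y ∉ B, ∃ A ∈ L, B ⊆ A ∧ y ∉ A) : B ∈ L := by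
  choose! A hAL hBA hyA using hsep
  have hne : Bᶜ.Nonempty := by rwa [nonempty_iff_ne_empty, Ne, compl_eq_empty_iff]
  have hinf : Bᶜ.inf' hne A = B := by
    refine Subset.antisymm (fun y hy ↦ ?_) (le_inf' hne A fun y hy ↦ hBA y (mem_compl.1 hy))
    by_contra hyB
    exact hyA y hyB (inf'_le A (mem_compl.2 hyB) hy)
  exact hinf ▸ hL.finsetInf'_mem hne fun y hy ↦ hAL y (mem_compl.1 hy)

theorem mem_of_omittedPoints_subset (hL : InfClosed (L : Set (Finset α)))
    (hB : B ≠ univ) (hsub : omittedPoints L ⊆ B) : B ∈ L := by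
  refine mem_of_forall_notMem_exists_superset hL hB fun y hy ↦ ⟨{y}ᶜ, ?_, ?_, by simp⟩
  · by_contra hyL
    exact hy (hsub (mem_omittedPoints.2 hyL))
  · rwa [subset_compl_comm, singleton_subset_iff, mem_compl]

theorem notMem_omittedPoints_of_exists_superset (hproper : univ ∉ L)
    (hcover : ∃ B ∈ L, {x}ᶜ ⊆ B) : x ∉ omittedPoints L := by
  obtain ⟨B, hBL, hxB⟩ := hcover
  rw [mem_omittedPoints, not_not]
  rcases subset_singleton_iff.1 (compl_le_of_compl_le hxB) with hB | hB
  · exact absurd (compl_eq_empty_iff B |>.1 hB ▸ hBL) hproper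
  · rwa [← hB, compl_compl]

theorem compl_pair_mem_of_exists_superset (hproper : univ ∉ L)
    (hx : x ∈ omittedPoints L) (hy : y ∈ omittedPoints L)
    (hcover : ∃ B ∈ L, {x, y}ᶜ ⊆ B) : {x, y}ᶜ ∈ L := by
  obtain ⟨B, hBL, hxyB⟩ := hcover
  have hxB : x ∉ B := fun hxB ↦ notMem_omittedPoints_of_exists_superset hproper
    ⟨B, hBL, by grind [mem_compl]⟩ hy
  have hyB : y ∉ B := fun hyB ↦ notMem_omittedPoints_of_exists_superset hproper
    ⟨B, hBL, by grind [mem_compl]⟩ hx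
  have hB : {x, y}ᶜ = B := by grind [mem_compl]
  exact hB ▸ hBL

theorem singleton_mem_of_card_erase_omittedPoints_ne_one [Nontrivial α]
    (hL : InfClosed (L : Set (Finset α)))
    (hpair : (omittedPoints L : Set α).Pairwise fun x y ↦ {x, y}ᶜ ∈ L)
    (hu : #((omittedPoints L).erase u) ≠ 1) : {u} ∈ L := by
  refine mem_of_forall_notMem_exists_superset hL (singleton_ne_univ u) fun y hyu ↦ ?_
  rw [mem_singleton] at hyu
  by_cases hy : y ∈ omittedPoints L
  · have hy' : y ∈ (omittedPoints L).erase u := mem_erase.2 ⟨hyu, hy⟩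
    have hcard : 1 < #((omittedPoints L).erase u) :=
      lt_of_le_of_ne' (card_pos.2 ⟨y, hy'⟩) hu
    obtain ⟨z, hz, hzy⟩ := exists_mem_ne hcard y
    obtain ⟨hzu, hz⟩ := mem_erase.1 hz
    exact ⟨{y, z}ᶜ, hpair hy hz hzy.symm, by grind [mem_compl], by simp⟩
  · rw [mem_omittedPoints, not_not] at hy
    exact ⟨{y}ᶜ, hy, by grind [mem_compl], by simp⟩

theorem exists_ne_card_erase_ne_one (M : Finset α) (hα : 4 ≤ Fintype.card α) (hM : #M ≠ 1) :
    ∃ u v, u ≠ v ∧ #(M.erase u) ≠ 1 ∧ #(M.erase v) ≠ 1 := by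
  by_cases hM2 : #M = 2
  · have hcompl : 1 < #Mᶜ := by rw [card_compl]; lia
    obtain ⟨u, hu, v, hv, huv⟩ := one_lt_card.1 hcompl
    rw [mem_compl] at hu hv
    exact ⟨u, v, huv, by rwa [erase_eq_of_notMem hu], by rwa [erase_eq_of_notMem hv]⟩
  · obtain ⟨u, v, huv⟩ := Fintype.exists_pair_of_one_lt_card (α := α) (by lia)
    have herase (w : α) : #(M.erase w) ≠ 1 := by grind [card_erase_eq_ite]
    exact ⟨u, v, huv, herase u, herase v⟩

end FiniteGroundSet

section Rank

variable {k : ℕ} {L : Finset (Finset (Fin k))}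

theorem exists_superset_of_card_lt_patRank {D : Finset (Fin k)} (hD : #D < patRank k L) :
    ∃ B ∈ L, D ⊆ B := by
  by_contra! hcover
  exact hD.not_ge (Nat.sInf_le ⟨D, rfl, hcover⟩)

theorem isType1_iff_exists_omittedPoints_eq_singleton :
    IsType1 L ↔ ∃ x, omittedPoints L = {x} := by
  simp only [IsType1, ← compl_singleton, eq_singleton_iff_unique_mem, mem_omittedPoints,
    not_imp_comm, ne_eq]

theorem omittedPoints_eq_empty_of_patRank_eq (hproper : univ ∉ L) (hrank : patRank k L = k) :
    omittedPoints L = ∅ := by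
  refine eq_empty_of_forall_notMem fun x ↦
    notMem_omittedPoints_of_exists_superset hproper (exists_superset_of_card_lt_patRank ?_)
  rw [hrank, card_compl, card_singleton, Fintype.card_fin]
  exact Nat.sub_lt x.pos one_pos

theorem pairwise_compl_pair_mem_of_patRank_eq (hproper : univ ∉ L)
    (hrank : patRank k L = k - 1) :
    (omittedPoints L : Set (Fin k)).Pairwise fun x y ↦ {x, y}ᶜ ∈ L := by
  intro x hx y hy hxy
  refine compl_pair_mem_of_exists_superset hproper hx hy (exists_superset_of_card_lt_patRank ?_)
  rw [hrank, card_compl, card_pair hxy, Fintype.card_fin]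
  lia

end Rank

/-- Lemma 3.5: for an intersection-closed family L of proper subsets of [k] (k ≥ 3):
(1) if L has rank k then L consists of all proper subsets of [k];
(2) if L has rank k-1 and is of type 1 then L contains all proper subsets of [k]
containing some fixed i;
(3) if k ≥ 4 and L has rank k-1 and is of type 2 then L contains two distinct singletons. -/
theorem rank_facts (k : ℕ) (hk : 3 ≤ k) (L : Finset (Finset (Fin k)))
    (hproper : ∀ B ∈ L, B ≠ Finset.univ)
    (hclosed : ∀ A ∈ L, ∀ B ∈ L, A ∩ B ∈ L) :
    (patRank k L = k → L = Finset.univ.filter (fun B => B ≠ Finset.univ)) ∧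
    (patRank k L = k - 1 → IsType1 L →
      ∃ i : Fin k, ∀ B : Finset (Fin k), B ≠ Finset.univ → i ∈ B → B ∈ L) ∧
    (4 ≤ k → patRank k L = k - 1 → ¬ IsType1 L →
      ∃ u v : Fin k, u ≠ v ∧ {u} ∈ L ∧ {v} ∈ L) := by
  have huniv : univ ∉ L := fun h ↦ hproper univ h rfl
  have hL : InfClosed (L : Set (Finset (Fin k))) := fun A hA B hB ↦ hclosed A hA B hB
  refine ⟨fun hrank ↦ ?_, fun _ htype ↦ ?_, fun hk4 hrank htype ↦ ?_⟩
  · have hempty := omittedPoints_eq_empty_of_patRank_eq huniv hrank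
    ext B
    rw [mem_filter_univ]
    exact ⟨hproper B, fun hB ↦ mem_of_omittedPoints_subset hL hB (by simp [hempty])⟩
  · obtain ⟨i, hi⟩ := isType1_iff_exists_omittedPoints_eq_singleton.1 htype
    exact ⟨i, fun B hB hiB ↦ mem_of_omittedPoints_subset hL hB (by simpa [hi] using hiB)⟩
  · have hpair := pairwise_compl_pair_mem_of_patRank_eq huniv hrank
    have hcard : #(omittedPoints L) ≠ 1 := by
      rwa [Ne, card_eq_one, ← isType1_iff_exists_omittedPoints_eq_singleton]
    have : Nontrivial (Fin k) := Fin.nontrivial_iff_two_le.2 (by lia)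
    obtain ⟨u, v, huv, hu, hv⟩ := exists_ne_card_erase_ne_one (omittedPoints L) (by simpa) hcard
    exact ⟨u, v, huv, singleton_mem_of_card_erase_omittedPoints_ne_one hL hpair hu,
      singleton_mem_of_card_erase_omittedPoints_ne_one hL hpair hv⟩
end
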